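/- For every ε > 0 there exists an integer A such that for every odd integer a ≥ A, one has n₁(a) + n₂(a) ≥ (2−ε)·(log a)/(1+log 2), where n₁(a) is the number of odd integers i ∈ {3,5,…,a} such that ζ(i) ∉ ℚ, and n₂(a) is the number of odd integers j ∈ {5,7,…,a} such that ζ(j) ∉ ℚ and ζ(j−2) ∈ ℚ. -/

import Mathlib

/-- The Riemann zeta value ζ(s) = Σ_{m ≥ 1} m^{-s}, as a real number. -/
noncomputable def zeta (s : ℕ) : ℝ := ∑' m : ℕ, 1 / ((m : ℝ) + 1) ^ s


/-- admissible points -/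
def okPt (n : ℕ) (t : ℝ) : Prop := ∀ l : ℕ, l ≤ n → t + l ≠ 0

/-- partial fraction sum -/
noncomputable def pfSum (n S : ℕ) (a : ℕ → ℕ → ℝ) (t : ℝ) : ℝ :=
  ∑ k ∈ Finset.range (n+1), ∑ i ∈ Finset.range S, a i k / (t + k) ^ (i+1)

def PMem (n L S : ℕ) (f : ℝ → ℝ) : Prop :=
  ∃ z : ℕ → ℕ → ℤ, ∀ t, okPt n t → f t = pfSum n S (fun i k => (z i k : ℝ) / (L:ℝ) ^ (S-1-i)) t

def IsBlk (n : ℕ) (f : ℝ → ℝ) : Prop :=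
  ∃ z : ℕ → ℤ, ∀ t, okPt n t → f t = ∑ k ∈ Finset.range (n+1), (z k : ℝ) / (t + k)

lemma PMem.congr {n L S : ℕ} {f g : ℝ → ℝ} (hf : PMem n L S f)
    (h : ∀ t, okPt n t → g t = f t) : PMem n L S g := by
  obtain ⟨z, hz⟩ := hf
  exact ⟨z, fun t ht => by rw [h t ht, hz t ht]⟩

lemma PMem.add {n L S : ℕ} {f g : ℝ → ℝ} (hf : PMem n L S f) (hg : PMem n L S g) :
    PMem n L S (fun t => f t + g t) := by
  obtain ⟨z, hz⟩ := hf
  obtain ⟨w, hw⟩ := hg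
  refine ⟨fun i k => z i k + w i k, fun t ht => ?_⟩
  simp only
  rw [hz t ht, hw t ht]
  unfold pfSum
  rw [← Finset.sum_add_distrib]
  refine Finset.sum_congr rfl fun k _ => ?_
  rw [← Finset.sum_add_distrib]
  refine Finset.sum_congr rfl fun i _ => ?_
  push_cast
  ring

lemma PMem.zsmul {n L S : ℕ} {f : ℝ → ℝ} (c : ℤ) (hf : PMem n L S f) :
    PMem n L S (fun t => (c:ℝ) * f t) := by
  obtain ⟨z, hz⟩ := hf
  refine ⟨fun i k => c * z i k, fun t ht => ?_⟩
  simp only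
  rw [hz t ht]
  unfold pfSum
  rw [Finset.mul_sum]
  refine Finset.sum_congr rfl fun k _ => ?_
  rw [Finset.mul_sum]
  refine Finset.sum_congr rfl fun i _ => ?_
  push_cast
  ring

lemma PMem.zero {n L S : ℕ} : PMem n L S (fun _ => 0) :=
  ⟨fun _ _ => 0, fun t _ => by simp [pfSum]⟩

lemma PMem.sum {n L S : ℕ} {ι : Type} (s : Finset ι) (f : ι → ℝ → ℝ)
    (h : ∀ i ∈ s, PMem n L S (f i)) : PMem n L S (fun t => ∑ i ∈ s, f i t) := by
  classical
  induction s using Finset.induction_on with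
  | empty => simpa using PMem.zero
  | insert a s ha ih =>
    simp only [Finset.sum_insert ha]
    exact PMem.add (h a (by simp)) (ih fun i hi => h i (by simp [hi]))

lemma PMem.basis {n L S i k : ℕ} (hi : i < S) (hk : k ≤ n) :
    PMem n L S (fun t => 1 / ((L:ℝ) ^ (S-1-i) * (t + k) ^ (i+1))) := by
  refine ⟨fun i' k' => if i' = i ∧ k' = k then 1 else 0, fun t ht => ?_⟩
  unfold pfSum
  rw [Finset.sum_eq_single k, Finset.sum_eq_single i]
  · simp [div_eq_mul_inv, mul_comm]
  · intro b _ hb; simp [hb]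
  · intro h; exact absurd (Finset.mem_range.2 hi) h
  · intro b _ hb; simp [hb]
  · intro h; exact absurd (Finset.mem_range.2 (by omega)) h

lemma PMem.basis_mul {n L S i k l : ℕ} (hL0 : 0 < L) (hL : ∀ m : ℕ, 1 ≤ m → m ≤ n → m ∣ L)
    (hi : i < S) (hk : k ≤ n) (hl : l ≤ n) :
    PMem n L (S+1) (fun t => 1 / ((L:ℝ) ^ (S-1-i) * (t + k) ^ (i+1)) * (1 / (t + l))) := by
  have hLr : (L:ℝ) ≠ 0 := by positivity
  by_cases hkl : k = l
  · subst hkl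
    refine (PMem.basis (n := n) (L := L) (S := S+1) (i := i+1) (k := k) (by omega) hk).congr
      fun t ht => ?_
    have := ht k hk
    rw [show S + 1 - 1 - (i+1) = S - 1 - i by omega, pow_succ (t + (k:ℝ)) (i+1)]
    field_simp
  · obtain ⟨q, hq⟩ : ∃ q : ℤ, (L:ℤ) = ((l:ℤ) - k) * q := by
      have h1 : (((l:ℤ) - k).natAbs) ∣ L := by
        apply hL <;> omega
      exact Int.natAbs_dvd.1 (Int.natCast_dvd_natCast.2 h1)
    have hqr : (L:ℝ) = ((l:ℝ) - k) * q := by exact_mod_cast hq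
    have hlk : (l:ℝ) - k ≠ 0 := by
      rw [sub_ne_zero]; exact_mod_cast (Ne.symm hkl)
    induction i with
    | zero =>
      refine (PMem.zsmul q (((PMem.basis (n := n) (L := L) (S := S+1) (i := 0) (k := k)
        (by omega) hk)).add (PMem.zsmul (-1) (PMem.basis (n := n) (L := L) (S := S+1) (i := 0)
        (k := l) (by omega) hl)))).congr fun t ht => ?_
      have h1 := ht k hk
      have h2 := ht l hl
      have e : S + 1 - 1 - 0 = (S - 1 - 0) + 1 := by omega
      rw [e, pow_succ (L:ℝ)]
      have hp : (L:ℝ)^(S-1-0) ≠ 0 := pow_ne_zero _ hLr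
      generalize (L:ℝ)^(S-1-0) = X at hp
      field_simp
      rw [hqr]; push_cast; ring
    | succ i ih =>
      have ih' := ih (by omega)
      refine (PMem.zsmul q (((PMem.basis (n := n) (L := L) (S := S+1) (i := i+1) (k := k)
        (by omega) hk)).add (PMem.zsmul (-1) ih'))).congr fun t ht => ?_
      have h1 := ht k hk
      have h2 := ht l hl
      have e : S + 1 - 1 - (i+1) = (S - 1 - (i+1)) + 1 := by omega
      have e2 : S - 1 - i = (S - 1 - (i+1)) + 1 := by omega
      rw [e, e2, pow_succ (L:ℝ)]
      have hp : (L:ℝ)^(S-1-(i+1)) ≠ 0 := pow_ne_zero _ hLr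
      generalize (L:ℝ)^(S-1-(i+1)) = X at hp
      rw [pow_succ (t + (k:ℝ)) (i+1)]
      have hp2 : (t + (k:ℝ))^(i+1) ≠ 0 := pow_ne_zero _ h1
      generalize (t + (k:ℝ))^(i+1) = Y at hp2
      field_simp
      rw [hqr]; push_cast; ring

lemma PMem.mul_blk {n L S : ℕ} (hL0 : 0 < L) (hL : ∀ m : ℕ, 1 ≤ m → m ≤ n → m ∣ L)
    {f g : ℝ → ℝ} (hf : PMem n L S f) (hg : IsBlk n g) : PMem n L (S+1) (fun t => f t * g t) := by
  obtain ⟨z, hz⟩ := hf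
  obtain ⟨w, hw⟩ := hg
  have key : PMem n L (S+1) (fun t => ∑ k ∈ Finset.range (n+1), ∑ i ∈ Finset.range S,
      ∑ l ∈ Finset.range (n+1), ((z i k * w l : ℤ) : ℝ) *
        (1 / ((L:ℝ) ^ (S-1-i) * (t + k) ^ (i+1)) * (1 / (t + l)))) := by
    refine PMem.sum _ _ fun k hk => PMem.sum _ _ fun i hi => PMem.sum _ _ fun l hl => ?_
    simp only [Finset.mem_range] at hk hi hl
    exact PMem.zsmul _ (PMem.basis_mul hL0 hL hi (by omega) (by omega))
  refine key.congr fun t ht => ?_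
  rw [hz t ht, hw t ht]
  unfold pfSum
  rw [Finset.sum_mul]
  refine Finset.sum_congr rfl fun k _ => ?_
  rw [Finset.sum_mul]
  refine Finset.sum_congr rfl fun i _ => ?_
  rw [Finset.mul_sum]
  refine Finset.sum_congr rfl fun l _ => ?_
  push_cast
  rw [div_div, div_eq_mul_one_div, div_eq_mul_one_div (w l : ℝ)]
  ring

lemma PMem.of_blk {n L : ℕ} {g : ℝ → ℝ} (hg : IsBlk n g) : PMem n L 1 g := by
  obtain ⟨w, hw⟩ := hg
  refine ⟨fun _ k => w k, fun t ht => ?_⟩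
  rw [hw t ht]
  simp [pfSum]

lemma PMem.prod {n L : ℕ} (hL0 : 0 < L) (hL : ∀ m : ℕ, 1 ≤ m → m ≤ n → m ∣ L)
    (g : ℕ → ℝ → ℝ) (S : ℕ) (hg : ∀ b, b ≤ S → IsBlk n (g b)) :
    PMem n L (S+1) (fun t => ∏ b ∈ Finset.range (S+1), g b t) := by
  induction S with
  | zero => simpa using PMem.of_blk (L := L) (hg 0 le_rfl)
  | succ S ih =>
    have := PMem.mul_blk hL0 hL (ih fun b hb => hg b (by omega)) (hg (S+1) le_rfl)
    refine this.congr fun t _ => ?_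
    rw [Finset.prod_range_succ]

lemma pf_unique_aux (n : ℕ) (C : ℝ) : ∀ (S : ℕ) (a : ℕ → ℕ → ℝ),
    (∀ t, okPt n t → pfSum n S a t = C) → ∀ i < S, ∀ k ≤ n, a i k = 0 := by
  intro S
  induction S with
  | zero => intro a _ i hi; omega
  | succ S ih =>
    intro a h
    have top : ∀ k0 ≤ n, a S k0 = 0 := by
      intro k0 hk0
      let g : ℝ → ℝ := fun t => (∑ i ∈ Finset.range (S+1), a i k0 * (t + k0)^(S-i)) +
        (t + k0)^(S+1) * ((∑ k ∈ (Finset.range (n+1)).erase k0,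
          ∑ i ∈ Finset.range (S+1), a i k / (t + k) ^ (i+1)) - C)
      have hcont : ContinuousAt g (-(k0:ℝ)) := by
        have h1 : ∀ k ∈ (Finset.range (n+1)).erase k0, ∀ i ∈ Finset.range (S+1),
            ContinuousAt (fun t : ℝ => a i k / (t + k) ^ (i+1)) (-(k0:ℝ)) := by
          intro k hk i _
          have hne : (-(k0:ℝ) + k) ≠ 0 := by
            have : k ≠ k0 := Finset.ne_of_mem_erase hk
            intro h0
            apply this
            have : (k:ℝ) = k0 := by linarith
            exact_mod_cast this
          refine ContinuousAt.div continuousAt_const (by fun_prop) (pow_ne_zero _ hne)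
        have h2 : ContinuousAt (fun t : ℝ => ∑ k ∈ (Finset.range (n+1)).erase k0,
          ∑ i ∈ Finset.range (S+1), a i k / (t + k) ^ (i+1)) (-(k0:ℝ)) :=
          tendsto_finsetSum _ fun k hk => tendsto_finsetSum _ fun i hi => h1 k hk i hi
        have h3 : Continuous (fun t : ℝ => ∑ i ∈ Finset.range (S+1), a i k0 * (t + k0)^(S-i)) := by
          fun_prop
        have h4 : Continuous (fun t : ℝ => (t + k0)^(S+1)) := by fun_prop
        exact h3.continuousAt.add (h4.continuousAt.mul (h2.sub continuousAt_const))
      have hev : ∀ᶠ t in nhdsWithin (-(k0:ℝ)) {-(k0:ℝ)}ᶜ, g t = 0 := by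
        have hok : ∀ᶠ t in nhdsWithin (-(k0:ℝ)) {-(k0:ℝ)}ᶜ, okPt n t := by
          have : ∀ l ∈ Finset.range (n+1), ∀ᶠ t in nhdsWithin (-(k0:ℝ)) {-(k0:ℝ)}ᶜ,
              t + (l:ℝ) ≠ 0 := by
            intro l _
            by_cases hl : l = k0
            · subst hl
              filter_upwards [self_mem_nhdsWithin] with t ht h0
              apply ht
              simp only [Set.mem_singleton_iff]
              linarith
            · refine Filter.Eventually.filter_mono nhdsWithin_le_nhds ?_
              have hc : Continuous (fun t : ℝ => t + (l:ℝ)) := by fun_prop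
              refine hc.continuousAt.eventually_ne ?_
              intro h0
              apply hl
              have : (l:ℝ) = k0 := by linarith
              exact_mod_cast this
          have h2 := (Filter.eventually_all_finset _).2 this
          filter_upwards [h2] with t ht l hl
          exact ht l (Finset.mem_range.2 (by omega))
        filter_upwards [hok] with t ht
        have hC := h t ht
        have hk0' : k0 ∈ Finset.range (n+1) := Finset.mem_range.2 (by omega)
        unfold pfSum at hC
        rw [← Finset.add_sum_erase _ _ hk0'] at hC
        have hne := ht k0 hk0
        have e1 : ∑ i ∈ Finset.range (S+1), a i k0 * (t + k0)^(S-i) =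
            (t + k0)^(S+1) * ∑ i ∈ Finset.range (S+1), a i k0 / (t + k0) ^ (i+1) := by
          rw [Finset.mul_sum]
          refine Finset.sum_congr rfl fun i hi => ?_
          have hi' : i ≤ S := by have := Finset.mem_range.1 hi; omega
          have : (t + (k0:ℝ))^(S+1) = (t+k0)^(S-i) * (t+k0)^(i+1) := by
            rw [← pow_add]; congr 1; omega
          rw [this]
          field_simp
        simp only [g]
        rw [e1, ← mul_add]
        rw [show ∀ x y c : ℝ, x + (y - c) = (x + y) - c by intros; ring, hC]
        simp
      have hlim : Filter.Tendsto g (nhdsWithin (-(k0:ℝ)) {-(k0:ℝ)}ᶜ) (nhds (g (-(k0:ℝ)))) :=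
        hcont.tendsto.mono_left nhdsWithin_le_nhds
      have hlim0 : Filter.Tendsto g (nhdsWithin (-(k0:ℝ)) {-(k0:ℝ)}ᶜ) (nhds 0) :=
        (tendsto_const_nhds).congr' (by filter_upwards [hev] with t ht; exact ht.symm)
      have hg0 : g (-(k0:ℝ)) = 0 := tendsto_nhds_unique hlim hlim0
      simp only [g] at hg0
      rw [Finset.sum_range_succ, Finset.sum_eq_zero] at hg0
      · simpa using hg0
      · intro i hi
        have := Finset.mem_range.1 hi
        rw [neg_add_cancel, zero_pow (by omega), mul_zero]
    intro i hi k hk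
    by_cases hiS : i = S
    · subst hiS; exact top k hk
    · refine ih a ?_ i (by omega) k hk
      intro t ht
      rw [← h t ht]
      unfold pfSum
      refine Finset.sum_congr rfl fun k hk => ?_
      rw [Finset.sum_range_succ, top k (by have := Finset.mem_range.1 hk; omega)]
      simp

lemma pf_unique {n S : ℕ} {C : ℝ} {a b : ℕ → ℕ → ℝ}
    (h : ∀ t, okPt n t → pfSum n S a t = pfSum n S b t + C) :
    ∀ i < S, ∀ k ≤ n, a i k = b i k := by
  intro i hi k hk
  have := pf_unique_aux n C S (fun i k => a i k - b i k) (fun t ht => by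
    have h1 := h t ht
    have : pfSum n S (fun i k => a i k - b i k) t = pfSum n S a t - pfSum n S b t := by
      unfold pfSum
      rw [← Finset.sum_sub_distrib]
      refine Finset.sum_congr rfl fun k _ => ?_
      rw [← Finset.sum_sub_distrib]
      refine Finset.sum_congr rfl fun i _ => ?_
      ring
    rw [this, h1]; ring) i hi k hk
  simpa [sub_eq_zero] using this

/-- removing a linear factor -/
lemma pf_removed {n S : ℕ} {f h : ℝ → ℝ} {a c : ℕ → ℕ → ℝ} {t0 : ℝ}
    (hf : ∀ t, okPt n t → f t = pfSum n S a t) (hh : ∀ t, okPt n t → h t = pfSum n S c t)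
    (hfh : ∀ t, okPt n t → f t = (t - t0) * h t) (hS : 1 ≤ S) {k : ℕ} (hk : k ≤ n)
    (hx : t0 + k ≠ 0) :
    ∑ i ∈ Finset.range S, a i k / (t0 + k) ^ (i+1) = - c 0 k := by
  obtain ⟨T, rfl⟩ : ∃ T, S = T + 1 := ⟨S - 1, by omega⟩
  let b : ℕ → ℕ → ℝ := fun i k => (if i < T then c (i+1) k else 0) - (t0 + k) * c i k
  have hab : ∀ i < T+1, ∀ k ≤ n, a i k = b i k := by
    refine pf_unique (C := ∑ k ∈ Finset.range (n+1), c 0 k) fun t ht => ?_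
    rw [← hf t ht, hfh t ht, hh t ht]
    unfold pfSum
    rw [Finset.mul_sum, ← Finset.sum_add_distrib]
    refine Finset.sum_congr rfl fun k hk => ?_
    have hne := ht k (by have := Finset.mem_range.1 hk; omega)
    have e1 : ∑ i ∈ Finset.range (T+1), b i k / (t + k)^(i+1) =
        ∑ i ∈ Finset.range T, c (i+1) k / (t+k)^(i+1)
          - ∑ i ∈ Finset.range (T+1), (t0 + k) * c i k / (t+k)^(i+1) := by
      simp only [b, sub_div, Finset.sum_sub_distrib]
      congr 1
      rw [Finset.sum_range_succ]
      simp only [lt_irrefl, if_false, zero_div, add_zero]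
      refine Finset.sum_congr rfl fun i hi => ?_
      rw [if_pos (Finset.mem_range.1 hi)]
    have e2 : ∑ i ∈ Finset.range T, c (i+1) k / (t+k)^(i+1) + c 0 k
        = ∑ i ∈ Finset.range (T+1), c i k / (t+k)^i := by
      rw [Finset.sum_range_succ']
      simp
    rw [e1, sub_add_eq_add_sub, e2, ← Finset.sum_sub_distrib, Finset.mul_sum]
    refine Finset.sum_congr rfl fun i _ => ?_
    field_simp
    ring
  have e3 : ∑ i ∈ Finset.range (T+1), a i k / (t0 + k) ^ (i+1) =
      ∑ i ∈ Finset.range (T+1), b i k / (t0 + k) ^ (i+1) :=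
    Finset.sum_congr rfl fun i hi => by rw [hab i (Finset.mem_range.1 hi) k hk]
  rw [e3]
  have e1 : ∑ i ∈ Finset.range (T+1), b i k / (t0 + k)^(i+1) =
      ∑ i ∈ Finset.range T, c (i+1) k / (t0+k)^(i+1)
        - ∑ i ∈ Finset.range (T+1), c i k / (t0+k)^i := by
    simp only [b, sub_div, Finset.sum_sub_distrib]
    congr 1
    · rw [Finset.sum_range_succ]
      simp only [lt_irrefl, if_false, zero_div, add_zero]
      refine Finset.sum_congr rfl fun i hi => ?_
      rw [if_pos (Finset.mem_range.1 hi)]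
    · refine Finset.sum_congr rfl fun i _ => ?_
      rw [pow_succ]
      field_simp
  rw [e1, Finset.sum_range_succ' (fun i => c i k / (t0+k)^i)]
  simp


open Polynomial in
lemma prod_erase_dvd (n k : ℕ) (hk : k ≤ n) :
    (∏ j ∈ (Finset.range (n+1)).erase k, ((j:ℤ) - k)) ∣ (n.factorial : ℤ) := by
  have e1 : ∏ j ∈ (Finset.range (n+1)).erase k, ((j:ℤ) - k) =
      ∏ j ∈ Finset.range (n+1), (if j = k then 1 else ((j:ℤ) - k)) := by
    rw [← Finset.mul_prod_erase (Finset.range (n+1)) (fun j => if j = k then (1:ℤ) else ((j:ℤ) - k))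
      (Finset.mem_range.2 (by omega : k < n+1))]
    simp only [if_true, one_mul]
    refine Finset.prod_congr rfl fun j hj => ?_
    rw [if_neg (Finset.ne_of_mem_erase hj)]
  obtain ⟨m, rfl⟩ : ∃ m, n = k + m := ⟨n - k, by omega⟩
  rw [e1, show k + m + 1 = k + (m + 1) by ring, Finset.prod_range_add, Finset.prod_range_succ']
  have e2 : ∏ j ∈ Finset.range k, (if j = k then 1 else ((j:ℤ) - k)) = (-1)^k * k.factorial := by
    rw [← Finset.prod_range_reflect]
    rw [← Finset.prod_range_add_one_eq_factorial]
    push_cast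
    rw [← Finset.card_range k, ← Finset.prod_const, Finset.card_range, ← Finset.prod_mul_distrib]
    refine Finset.prod_congr rfl fun j hj => ?_
    have := Finset.mem_range.1 hj
    rw [if_neg (by omega)]
    have : ((k - 1 - j : ℕ) : ℤ) = (k:ℤ) - 1 - j := by omega
    rw [this]; ring
  have e3 : ∏ x ∈ Finset.range m, (if k + (x + 1) = k then 1 else (((k + (x + 1) : ℕ):ℤ) - k))
      = m.factorial := by
    rw [← Finset.prod_range_add_one_eq_factorial]
    push_cast
    refine Finset.prod_congr rfl fun j hj => ?_
    rw [if_neg (by omega)]; ring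
  rw [e2, e3]
  simp only [add_zero, if_true, mul_one]
  have h1 : ((k.factorial * m.factorial : ℕ) : ℤ) ∣ ((k+m).factorial : ℤ) :=
    Int.natCast_dvd_natCast.2 (Nat.factorial_mul_factorial_dvd_factorial_add k m)
  push_cast at h1
  rw [mul_assoc]
  rcases neg_one_pow_eq_or ℤ k with h | h <;> rw [h] <;> simpa using h1

noncomputable def denP (n : ℕ) (t : ℝ) : ℝ := ∏ l ∈ Finset.range (n+1), (t + l)

lemma blk_of_poly (n : ℕ) (p : Polynomial ℝ) (hp : p.natDegree ≤ n)
    (hz : ∀ k ≤ n, ∃ z : ℤ, p.eval (-(k:ℝ)) = n.factorial * z) :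
    IsBlk n (fun t => p.eval t / denP n t) := by
  classical
  choose! z hz using hz
  have hw := fun k (hk : k ≤ n) => prod_erase_dvd n k hk
  choose! w hw using hw
  refine ⟨fun k => w k * z k, fun t ht => ?_⟩
  let v : ℕ → ℝ := fun l => -(l:ℝ)
  have hv : Set.InjOn v (Finset.range (n+1)) := by
    intro x _ y _ h
    simpa [v] using h
  have hdeg : p.degree < (Finset.range (n+1)).card := by
    rw [Finset.card_range]
    refine lt_of_le_of_lt Polynomial.degree_le_natDegree ?_
    exact_mod_cast Nat.lt_succ_of_le hp
  have h1 := Lagrange.eq_interpolate hv hdeg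
  have hnot : ∀ i ∈ Finset.range (n+1), t ≠ v i := by
    intro i hi h
    apply ht i (by have := Finset.mem_range.1 hi; omega)
    simp [h, v]
  have hden : denP n t = Polynomial.eval t (Lagrange.nodal (Finset.range (n+1)) v) := by
    rw [Lagrange.eval_nodal]
    simp [denP, v]
  have hden0 : denP n t ≠ 0 := by
    rw [denP, Finset.prod_ne_zero_iff]
    intro l hl
    exact ht l (by have := Finset.mem_range.1 hl; omega)
  conv_lhs => rw [h1]
  beta_reduce
  rw [Lagrange.eval_interpolate_not_at_node _ hnot, ← hden, mul_div_cancel_left₀ _ hden0]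
  refine Finset.sum_congr rfl fun k hk => ?_
  have hk' : k ≤ n := by have := Finset.mem_range.1 hk; omega
  have hw' : (n.factorial : ℝ) = (∏ j ∈ (Finset.range (n+1)).erase k, ((j:ℝ) - k)) * w k := by
    have := hw k hk'
    exact_mod_cast this
  have hP : (∏ j ∈ (Finset.range (n+1)).erase k, ((j:ℝ) - k)) ≠ 0 := by
    rw [Finset.prod_ne_zero_iff]
    intro j hj
    have := Finset.ne_of_mem_erase hj
    rw [sub_ne_zero]; exact_mod_cast this
  have hnw : Lagrange.nodalWeight (Finset.range (n+1)) v k =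
      (∏ j ∈ (Finset.range (n+1)).erase k, ((j:ℝ) - k))⁻¹ := by
    rw [Lagrange.nodalWeight, ← Finset.prod_inv_distrib]
    refine Finset.prod_congr rfl fun j _ => ?_
    simp only [v]
    congr 1; ring
  have htk := ht k hk'
  simp only [v] at *
  rw [hnw, hz k hk', hw']
  push_cast
  rw [sub_neg_eq_add]
  field_simp

lemma beta_dvd {n L : ℕ} (hL : ∀ m : ℕ, 1 ≤ m → m ≤ n → m ∣ L) (b : ℕ) : ∀ j : ℕ, j + 1 + b ≤ n →
    ((j + 1 + b).factorial : ℤ) ∣ L * (j.factorial * b.factorial) := by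
  induction b with
  | zero =>
    intro j hj
    obtain ⟨q, hq⟩ := hL (j+1) (by omega) (by omega)
    refine ⟨q, ?_⟩
    rw [hq, add_zero, Nat.factorial_succ]
    push_cast
    simp
    ring
  | succ b ih =>
    intro j hj
    obtain ⟨z1, h1⟩ := ih j (by omega)
    obtain ⟨z2, h2⟩ := ih (j+1) (by omega)
    refine ⟨z1 - z2, ?_⟩
    rw [show j + 1 + 1 + b = (j + 1 + b) + 1 by ring, Nat.factorial_succ (j+1+b),
      Nat.factorial_succ j] at h2
    rw [show j + 1 + (b + 1) = (j + 1 + b) + 1 by ring, Nat.factorial_succ (j+1+b),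
      Nat.factorial_succ b]
    push_cast at *
    linear_combination ((j:ℤ) + 1 + b + 1) * h1 - h2

lemma removed_dvd {n L : ℕ} (hL : ∀ m : ℕ, 1 ≤ m → m ≤ n → m ∣ L) (c : ℤ) (j1 : ℕ) (hj : j1 < n) :
    (n.factorial : ℤ) ∣ L * ∏ j ∈ (Finset.range n).erase j1, (c + j) := by
  have e1 : ∏ j ∈ (Finset.range n).erase j1, (c + (j:ℤ)) =
      ∏ j ∈ Finset.range n, (if j = j1 then 1 else (c + (j:ℤ))) := by
    rw [← Finset.mul_prod_erase (Finset.range n) (fun j => if j = j1 then (1:ℤ) else (c + (j:ℤ)))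
      (Finset.mem_range.2 hj)]
    simp only [if_true, one_mul]
    refine Finset.prod_congr rfl fun j hj => ?_
    rw [if_neg (Finset.ne_of_mem_erase hj)]
  obtain ⟨b, rfl⟩ : ∃ b, n = j1 + (b + 1) := ⟨n - j1 - 1, by omega⟩
  rw [e1, Finset.prod_range_add, Finset.prod_range_succ']
  have e2 : ∏ j ∈ Finset.range j1, (if j = j1 then 1 else (c + (j:ℤ))) =
      ∏ j ∈ Finset.range j1, (c + (j:ℤ)) := by
    refine Finset.prod_congr rfl fun j hj => ?_
    rw [if_neg (by have := Finset.mem_range.1 hj; omega)]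
  have e3 : ∏ x ∈ Finset.range b, (if j1 + (x + 1) = j1 then 1 else (c + ((j1 + (x + 1) : ℕ):ℤ)))
      = ∏ x ∈ Finset.range b, ((c + j1 + 1) + (x:ℤ)) := by
    refine Finset.prod_congr rfl fun j hj => ?_
    rw [if_neg (by omega)]; push_cast; ring
  rw [e2, e3]
  obtain ⟨u, hu⟩ := Nat.factorial_coe_dvd_prod j1 c
  obtain ⟨v, hv⟩ := Nat.factorial_coe_dvd_prod b (c + j1 + 1)
  obtain ⟨q, hq⟩ := beta_dvd hL b j1 (by omega)
  rw [hu, hv]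
  refine ⟨q * u * v, ?_⟩
  rw [show j1 + (b+1) = j1 + 1 + b by ring]
  simp only [add_zero, if_true, mul_one]
  linear_combination u * v * hq

noncomputable def Rf (D r B n S : ℕ) (t : ℝ) : ℝ :=
  (t - r * n) * (∏ j ∈ Finset.range (B * n), (D * (t - r * n) + (j + 1))) *
    (n.factorial : ℝ) ^ (S - B) / denP n t ^ S

open Polynomial in
noncomputable def numB (D r B n : ℕ) (b : ℕ) : Polynomial ℝ :=
  if b < B then ∏ j ∈ Finset.range n, (C (D:ℝ) * (X - C ((r:ℝ) * n)) + C ((b:ℝ) * n + j + 1))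
  else if b = B then C (n.factorial : ℝ) * (X - C ((r:ℝ) * n)) else C (n.factorial : ℝ)

open Polynomial in
noncomputable def numBR (D r B n L b1 j1 : ℕ) (b : ℕ) : Polynomial ℝ :=
  if b = b1 then C ((L:ℝ) * D) * ∏ j ∈ (Finset.range n).erase j1,
    (C (D:ℝ) * (X - C ((r:ℝ) * n)) + C ((b:ℝ) * n + j + 1))
  else numB D r B n b

lemma lin_natDegree (D c e : ℝ) :
    (Polynomial.C D * (Polynomial.X - Polynomial.C c) + Polynomial.C e).natDegree ≤ 1 := by
  compute_degree

lemma numB_blk (D r B n : ℕ) (hn : 1 ≤ n) (b : ℕ) :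
    IsBlk n (fun t => (numB D r B n b).eval t / denP n t) := by
  apply blk_of_poly
  · unfold numB
    split_ifs
    · refine (Polynomial.natDegree_prod_le _ _).trans ?_
      refine (Finset.sum_le_sum fun i _ => lin_natDegree _ _ _).trans ?_
      simp
    · refine le_trans ?_ hn
      compute_degree
    · simp
  · intro k hk
    unfold numB
    split_ifs
    · obtain ⟨z, hz⟩ := Nat.factorial_coe_dvd_prod n ((D:ℤ) * (-k - r * n) + b * n + 1)
      refine ⟨z, ?_⟩
      rw [Polynomial.eval_prod]
      have : (n.factorial : ℝ) * z = ((∏ i ∈ Finset.range n,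
          (((D:ℤ) * (-k - r * n) + b * n + 1) + (i:ℤ)) : ℤ) : ℝ) := by
        rw [hz]; push_cast; ring
      rw [this]
      push_cast
      refine Finset.prod_congr rfl fun j _ => ?_
      simp
      ring
    · refine ⟨-k - r * n, ?_⟩
      simp
    · exact ⟨1, by simp⟩

lemma numBR_blk (D r B n L b1 j1 : ℕ) (hL : ∀ m : ℕ, 1 ≤ m → m ≤ n → m ∣ L)
    (hn : 1 ≤ n) (hj : j1 < n) (b : ℕ) :
    IsBlk n (fun t => (numBR D r B n L b1 j1 b).eval t / denP n t) := by
  by_cases hb : b = b1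
  · apply blk_of_poly
    · unfold numBR
      rw [if_pos hb]
      refine (Polynomial.natDegree_C_mul_le _ _).trans ?_
      refine (Polynomial.natDegree_prod_le _ _).trans ?_
      refine (Finset.sum_le_sum fun i _ => lin_natDegree _ _ _).trans ?_
      simpa using (Finset.card_erase_le (s := Finset.range n) (a := j1))
    · intro k hk
      obtain ⟨z, hz⟩ := removed_dvd hL ((D:ℤ) * (-k - r * n) + b * n + 1) j1 hj
      refine ⟨D * z, ?_⟩
      unfold numBR
      rw [if_pos hb, Polynomial.eval_mul, Polynomial.eval_prod]
      have : (n.factorial : ℝ) * ((D * z : ℤ):ℝ) = D * ((L * ∏ i ∈ (Finset.range n).erase j1,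
          (((D:ℤ) * (-k - r * n) + b * n + 1) + (i:ℤ)) : ℤ) : ℝ) := by
        rw [hz]; push_cast; ring
      rw [this]
      push_cast
      have e : ∀ j ∈ (Finset.range n).erase j1, Polynomial.eval (-(k:ℝ)) (Polynomial.C (D:ℝ) *
          (Polynomial.X - Polynomial.C ((r:ℝ) * n)) + Polynomial.C ((b:ℝ) * n + j + 1)) =
          ((D:ℝ) * (-k - r * n) + b * n + 1) + (j:ℝ) := by
        intro j _
        simp
        ring
      rw [Finset.prod_congr rfl e]
      simp
      ring
  · have := numB_blk D r B n hn b
    unfold numBR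
    rw [if_neg hb]
    exact this

lemma prod_range_mul_aux (f : ℕ → ℝ) (B n : ℕ) :
    ∏ j ∈ Finset.range (B * n), f j = ∏ b ∈ Finset.range B, ∏ j ∈ Finset.range n, f (b * n + j) := by
  induction B with
  | zero => simp
  | succ B ih => rw [Nat.succ_mul, Finset.prod_range_add, ih, Finset.prod_range_succ]

lemma Rf_eq_prod (D r B n S : ℕ) (hS : B + 1 ≤ S) (t : ℝ) :
    Rf D r B n S t = ∏ b ∈ Finset.range S, ((numB D r B n b).eval t / denP n t) := by
  rw [Finset.prod_div_distrib, Finset.prod_const, Finset.card_range, Rf]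
  congr 1
  obtain ⟨m, rfl⟩ : ∃ m, S = B + 1 + m := ⟨S - (B+1), by omega⟩
  rw [Finset.prod_range_add, Finset.prod_range_succ]
  have e1 : ∏ x ∈ Finset.range B, (numB D r B n x).eval t =
      ∏ j ∈ Finset.range (B * n), (D * (t - r * n) + (j + 1)) := by
    rw [prod_range_mul_aux]
    refine Finset.prod_congr rfl fun b hb => ?_
    rw [numB, if_pos (Finset.mem_range.1 hb), Polynomial.eval_prod]
    refine Finset.prod_congr rfl fun j _ => ?_
    simp [add_assoc]
  have e2 : (numB D r B n B).eval t = n.factorial * (t - r * n) := by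
    simp [numB]
  have e3 : ∏ x ∈ Finset.range m, (numB D r B n (B + 1 + x)).eval t = (n.factorial:ℝ)^m := by
    rw [← Finset.card_range m, ← Finset.prod_const, Finset.card_range]
    refine Finset.prod_congr rfl fun x _ => ?_
    rw [numB, if_neg (by omega), if_neg (by omega)]
    simp
  rw [e1, e2, e3, show B + 1 + m - B = m + 1 by omega]
  ring

lemma numBR_prod (D r B n L S b1 j1 : ℕ) (hD : 1 ≤ D) (hb : b1 < B) (hS : B + 1 ≤ S)
    (hj : j1 < n) (t : ℝ) :
    (L:ℝ) * Rf D r B n S t = (t - (r * n - ((b1 * n + j1 : ℕ) + 1) / D)) *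
      ∏ b ∈ Finset.range S, ((numBR D r B n L b1 j1 b).eval t / denP n t) := by
  have hb' : b1 ∈ Finset.range S := Finset.mem_range.2 (by omega)
  rw [Rf_eq_prod D r B n S hS t, ← Finset.mul_prod_erase _ _ hb',
    ← Finset.mul_prod_erase _ (fun b => (numBR D r B n L b1 j1 b).eval t / denP n t) hb']
  have e1 : ∏ b ∈ (Finset.range S).erase b1, ((numBR D r B n L b1 j1 b).eval t / denP n t) =
      ∏ b ∈ (Finset.range S).erase b1, ((numB D r B n b).eval t / denP n t) := by
    refine Finset.prod_congr rfl fun b hb => ?_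
    rw [numBR, if_neg (Finset.ne_of_mem_erase hb)]
  rw [e1]
  have e2 : (L:ℝ) * (numB D r B n b1).eval t = (t - (r * n - ((b1 * n + j1 : ℕ) + 1) / D)) *
      (numBR D r B n L b1 j1 b1).eval t := by
    rw [numB, if_pos hb, numBR, if_pos rfl, Polynomial.eval_mul, Polynomial.eval_prod,
      Polynomial.eval_prod, ← Finset.mul_prod_erase _ _ (Finset.mem_range.2 hj)]
    have hD' : (D:ℝ) ≠ 0 := by positivity
    generalize (∏ x ∈ (Finset.range n).erase j1, _ : ℝ) = P
    simp only [Polynomial.eval_add, Polynomial.eval_mul, Polynomial.eval_C, Polynomial.eval_sub,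
      Polynomial.eval_X]
    push_cast
    field_simp
    ring
  rw [← mul_assoc, ← mul_assoc, ← mul_div_assoc, ← mul_div_assoc, e2]

theorem R_pf (D r B n S L : ℕ) (hD : 1 ≤ D) (hn : 1 ≤ n) (hS : B + 1 ≤ S) (hL0 : 0 < L)
    (hL : ∀ m : ℕ, 1 ≤ m → m ≤ n → m ∣ L) :
    ∃ a : ℕ → ℕ → ℝ, (∀ t, okPt n t → Rf D r B n S t = pfSum n S a t) ∧
      (∀ i < S, ∀ k, ∃ y : ℤ, (L:ℝ)^S * a i k = y) ∧
      ∀ k ≤ n, ∀ j < B * n, ((r:ℝ) * n - (j + 1) / D) + k ≠ 0 → ∃ y : ℤ, (L:ℝ)^S *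
        ∑ i ∈ Finset.range S, a i k / (((r:ℝ) * n - (j + 1) / D) + k) ^ (i+1) = y := by
  obtain ⟨T, rfl⟩ : ∃ T, S = T + 1 := ⟨S - 1, by omega⟩
  have hLr : (L:ℝ) ≠ 0 := by positivity
  have h1 := PMem.prod hL0 hL (fun b t => (numB D r B n b).eval t / denP n t) T
    (fun b _ => numB_blk D r B n hn b)
  obtain ⟨z, hz⟩ := h1
  have hR : ∀ t, okPt n t → Rf D r B n (T+1) t =
      pfSum n (T+1) (fun i k => (z i k : ℝ) / (L:ℝ) ^ (T+1-1-i)) t := by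
    intro t ht
    rw [Rf_eq_prod D r B n (T+1) hS t]
    exact hz t ht
  refine ⟨_, hR, ?_, ?_⟩
  · intro i hi k
    refine ⟨z i k * L^(i+1), ?_⟩
    have : (L:ℝ)^(T+1) = L^(T+1-1-i) * L^(i+1) := by rw [← pow_add]; congr 1; omega
    rw [this]; push_cast; field_simp
  · intro k hk j hj hne
    have hn0 : 0 < n := hn
    have hb1 : j / n < B := by rw [Nat.div_lt_iff_lt_mul hn0]; exact hj
    have hj1 : j % n < n := Nat.mod_lt _ hn0
    have hjj : j / n * n + j % n = j := Nat.div_add_mod' j n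
    have h2 := PMem.prod hL0 hL
      (fun b t => (numBR D r B n L (j/n) (j%n) b).eval t / denP n t) T
      (fun b _ => numBR_blk D r B n L (j/n) (j%n) hL hn hj1 b)
    obtain ⟨w, hw⟩ := h2
    have h3 := pf_removed (n := n) (S := T+1) (f := fun t => (L:ℝ) * Rf D r B n (T+1) t)
      (h := fun t => ∏ b ∈ Finset.range (T+1), ((numBR D r B n L (j/n) (j%n) b).eval t / denP n t))
      (a := fun i k => (L:ℝ) * ((z i k : ℝ) / (L:ℝ) ^ (T+1-1-i)))
      (c := fun i k => ((w i k : ℝ) / (L:ℝ) ^ (T+1-1-i)))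
      (t0 := (r:ℝ) * n - (j + 1) / D) (k := k)
      (by
        intro t ht
        rw [hR t ht]
        unfold pfSum
        rw [Finset.mul_sum]
        refine Finset.sum_congr rfl fun k _ => ?_
        rw [Finset.mul_sum]
        refine Finset.sum_congr rfl fun i _ => ?_
        ring)
      hw
      (by
        intro t ht
        have := numBR_prod D r B n L (T+1) (j/n) (j%n) hD hb1 hS hj1 t
        rw [hjj] at this
        exact this) (by omega) hk hne
    refine ⟨- w 0 k, ?_⟩
    have h4 : (L:ℝ)^(T+1) * ∑ i ∈ Finset.range (T+1), (z i k : ℝ) / (L:ℝ) ^ (T+1-1-i) /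
        (((r:ℝ) * n - (j + 1) / D) + k) ^ (i+1) = L^T * ∑ i ∈ Finset.range (T+1),
        (L:ℝ) * ((z i k : ℝ) / (L:ℝ) ^ (T+1-1-i)) / (((r:ℝ) * n - (j + 1) / D) + k) ^ (i+1) := by
      rw [Finset.mul_sum, Finset.mul_sum]
      refine Finset.sum_congr rfl fun i _ => ?_
      rw [pow_succ (L:ℝ) T]
      ring
    rw [h4, h3]
    simp only [Nat.add_sub_cancel, Nat.sub_zero]
    push_cast
    field_simp


open Filter Topology in
lemma zeta_tendsto (i : ℕ) (hi : 1 ≤ i) :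
    Tendsto (fun N : ℕ => ∑ ν ∈ Finset.range N, 1 / ((ν:ℝ) + 1) ^ (i+1)) atTop (𝓝 (zeta (i+1))) := by
  have h : Summable (fun ν : ℕ => 1 / ((ν:ℝ) + 1) ^ (i+1)) := by
    have := (summable_nat_add_iff 1).2 (Real.summable_one_div_nat_pow.2 (by omega : 1 < i+1))
    simpa using this
  exact h.hasSum.tendsto_sum_nat

lemma inv_tail_tendsto (c i : ℕ) : Filter.Tendsto (fun N : ℕ => ∑ x ∈ Finset.range c,
    1 / (((N + x : ℕ) : ℝ) + 1) ^ (i+1)) Filter.atTop (nhds 0) := by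
  rw [← Finset.sum_const_zero (s := Finset.range c)]
  refine tendsto_finsetSum _ fun x _ => ?_
  have h1 : Filter.Tendsto (fun N : ℕ => (((N + x : ℕ) : ℝ) + 1)) Filter.atTop Filter.atTop := by
    push_cast
    exact Filter.tendsto_atTop_add_const_right _ _
      (Filter.tendsto_atTop_add_const_right _ _ tendsto_natCast_atTop_atTop)
  have h2 := (Filter.tendsto_pow_atTop (α := ℝ) (n := i+1) (by omega)).comp h1
  simp only [one_div]
  exact tendsto_inv_atTop_zero.comp h2

open Filter Topology in
theorem linform {n S d : ℕ} (hd : 1 ≤ d) {f : ℝ → ℝ} {a : ℕ → ℕ → ℝ}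
    (hf : ∀ t, okPt n t → f t = pfSum n S a t)
    (hsum : Summable (fun ν : ℕ => f (((ν:ℝ) + 1) / d)))
    (h0 : ∑ k ∈ Finset.range (n+1), a 0 k = 0) :
    ∑' ν : ℕ, f (((ν:ℝ) + 1) / d) =
      ∑ i ∈ Finset.range S, (if i = 0 then 0 else
        (∑ k ∈ Finset.range (n+1), a i k) * d ^ (i+1) * zeta (i+1)) -
      ∑ k ∈ Finset.range (n+1), ∑ ν ∈ Finset.range (d * k), ∑ i ∈ Finset.range S,
        a i k / (((ν:ℝ) + 1) / d) ^ (i+1) := by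
  have hd0 : (0:ℝ) < d := by positivity
  let H : ℕ → ℕ → ℝ := fun i N => ∑ ν ∈ Finset.range N, 1 / ((ν:ℝ) + 1) ^ (i+1)
  -- partial sums
  have hpart : ∀ N : ℕ, ∑ ν ∈ Finset.range N, f (((ν:ℝ) + 1) / d) =
      ∑ i ∈ Finset.range S, ∑ k ∈ Finset.range (n+1), a i k * d^(i+1) * H i (d * k + N) -
      ∑ k ∈ Finset.range (n+1), ∑ ν ∈ Finset.range (d * k), ∑ i ∈ Finset.range S,
        a i k / (((ν:ℝ) + 1) / d) ^ (i+1) := by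
    intro N
    have e1 : ∀ ν ∈ Finset.range N, f (((ν:ℝ) + 1) / d) = ∑ k ∈ Finset.range (n+1),
        ∑ i ∈ Finset.range S, a i k * d^(i+1) * (1 / (((d * k + ν : ℕ) : ℝ) + 1)^(i+1)) := by
      intro ν _
      rw [hf]
      · unfold pfSum
        refine Finset.sum_congr rfl fun k _ => Finset.sum_congr rfl fun i _ => ?_
        have : ((ν:ℝ) + 1) / d + k = (((d * k + ν : ℕ) : ℝ) + 1) / d := by
          push_cast; field_simp; ring
        rw [this, div_pow]
        have : (((d * k + ν : ℕ) : ℝ) + 1) ≠ 0 := by positivity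
        field_simp
      · intro l _
        positivity
    rw [Finset.sum_congr rfl e1, Finset.sum_comm, Finset.sum_comm (s := Finset.range S),
      ← Finset.sum_sub_distrib]
    refine Finset.sum_congr rfl fun k _ => ?_
    rw [Finset.sum_comm, Finset.sum_comm (s := Finset.range (d*k)), ← Finset.sum_sub_distrib]
    refine Finset.sum_congr rfl fun i _ => ?_
    simp only [H]
    rw [Finset.sum_range_add, mul_add, Finset.mul_sum, Finset.mul_sum]
    have : ∑ ν ∈ Finset.range (d * k), a i k / (((ν:ℝ) + 1) / d) ^ (i+1) =
        ∑ ν ∈ Finset.range (d * k), a i k * d^(i+1) * (1 / ((ν:ℝ) + 1)^(i+1)) := by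
      refine Finset.sum_congr rfl fun ν _ => ?_
      rw [div_pow]
      have : ((ν : ℝ) + 1) ≠ 0 := by positivity
      field_simp
    rw [this]
    ring
  have hlim1 : Tendsto (fun N : ℕ => ∑ ν ∈ Finset.range N, f (((ν:ℝ) + 1) / d)) atTop
      (𝓝 (∑' ν : ℕ, f (((ν:ℝ) + 1) / d))) := hsum.hasSum.tendsto_sum_nat
  have hlim2 : Tendsto (fun N : ℕ => ∑ i ∈ Finset.range S, ∑ k ∈ Finset.range (n+1),
      a i k * d^(i+1) * H i (d * k + N)) atTop (𝓝 (∑ i ∈ Finset.range S, (if i = 0 then 0 else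
        (∑ k ∈ Finset.range (n+1), a i k) * d ^ (i+1) * zeta (i+1)))) := by
    refine tendsto_finsetSum _ fun i _ => ?_
    split_ifs with hi
    · subst hi
      have e2 : ∀ N, ∑ k ∈ Finset.range (n+1), a 0 k * d^(0+1) * H 0 (d * k + N) =
          ∑ k ∈ Finset.range (n+1), a 0 k * d^(0+1) * (∑ x ∈ Finset.range (d*k),
            1 / (((N + x : ℕ) : ℝ) + 1) ^ (0+1)) := by
        intro N
        have : ∑ k ∈ Finset.range (n+1), a 0 k * d^(0+1) * H 0 N = 0 := by
          rw [← Finset.sum_mul, ← Finset.sum_mul, h0]; simp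
        rw [← sub_zero (∑ k ∈ Finset.range (n+1), a 0 k * d^(0+1) * H 0 (d * k + N)), ← this,
          ← Finset.sum_sub_distrib]
        refine Finset.sum_congr rfl fun k _ => ?_
        simp only [H]
        rw [add_comm (d*k) N, Finset.sum_range_add]
        ring
      simp only [e2]
      have : (0:ℝ) = ∑ k ∈ Finset.range (n+1), a 0 k * d^(0+1) * 0 := by simp
      rw [this]
      exact tendsto_finsetSum _ fun k _ => (inv_tail_tendsto (d*k) 0).const_mul _
    · rw [Finset.sum_mul, Finset.sum_mul]
      refine tendsto_finsetSum _ fun k _ => ?_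
      refine Tendsto.const_mul _ ?_
      have := (zeta_tendsto i (by omega)).comp (tendsto_add_atTop_nat (d*k))
      refine this.congr fun N => ?_
      simp only [H, Function.comp, add_comm N]
  have hlim3 := hlim2.sub_const (∑ k ∈ Finset.range (n+1), ∑ ν ∈ Finset.range (d * k),
    ∑ i ∈ Finset.range S, a i k / (((ν:ℝ) + 1) / d) ^ (i+1))
  exact tendsto_nhds_unique hlim1 (hlim3.congr fun N => (hpart N).symm)

open Filter Topology in
theorem rho_zero {n S : ℕ} (hS : 1 ≤ S) {f : ℝ → ℝ} {a : ℕ → ℕ → ℝ}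
    (hf : ∀ t, okPt n t → f t = pfSum n S a t)
    (hlim : Tendsto (fun m : ℕ => ((m:ℝ) + 1) * f ((m:ℝ) + 1)) atTop (𝓝 0)) :
    ∑ k ∈ Finset.range (n+1), a 0 k = 0 := by
  have h1 : Tendsto (fun m : ℕ => ((m:ℝ) + 1) * f ((m:ℝ) + 1)) atTop
      (𝓝 (∑ k ∈ Finset.range (n+1), ∑ i ∈ Finset.range S, if i = 0 then a i k else 0)) := by
    have e : ∀ m : ℕ, ((m:ℝ) + 1) * f ((m:ℝ) + 1) = ∑ k ∈ Finset.range (n+1), ∑ i ∈ Finset.range S,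
        a i k * (((m:ℝ) + 1) / ((m:ℝ) + 1 + k) * (1 / ((m:ℝ) + 1 + k))^i) := by
      intro m
      rw [hf]
      · unfold pfSum
        rw [Finset.mul_sum]
        refine Finset.sum_congr rfl fun k _ => ?_
        rw [Finset.mul_sum]
        refine Finset.sum_congr rfl fun i _ => ?_
        have : (m:ℝ) + 1 + k ≠ 0 := by positivity
        rw [div_pow, one_pow, pow_succ]
        field_simp
      · intro l _; positivity
    simp only [e]
    refine tendsto_finsetSum _ fun k _ => tendsto_finsetSum _ fun i _ => ?_
    have hat : Tendsto (fun m : ℕ => (m:ℝ) + 1 + k) atTop atTop :=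
      tendsto_atTop_add_const_right _ _
        (tendsto_atTop_add_const_right _ _ tendsto_natCast_atTop_atTop)
    have hA : Tendsto (fun m : ℕ => 1 / ((m:ℝ) + 1 + k)) atTop (𝓝 0) := by
      simp only [one_div]
      exact tendsto_inv_atTop_zero.comp hat
    have hB : Tendsto (fun m : ℕ => ((m:ℝ) + 1) / ((m:ℝ) + 1 + k)) atTop (𝓝 1) := by
      have : Tendsto (fun m : ℕ => 1 - (k:ℝ) * (1 / ((m:ℝ) + 1 + k))) atTop (𝓝 (1 - k * 0)) :=
        (hA.const_mul _).const_sub _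
      rw [mul_zero, sub_zero] at this
      refine this.congr fun m => ?_
      have : (m:ℝ) + 1 + k ≠ 0 := by positivity
      field_simp
      ring
    have hC := (hB.mul (hA.pow i)).const_mul (a i k)
    split_ifs with hi
    · subst hi; simpa using hC
    · simpa [hi] using hC
  have h2 := tendsto_nhds_unique h1 hlim
  rw [← h2]
  refine Finset.sum_congr rfl fun k _ => ?_
  rw [Finset.sum_ite_eq' ]
  simp
  omega

theorem rho_even {n S : ℕ} {f : ℝ → ℝ} {a : ℕ → ℕ → ℝ}
    (hf : ∀ t, okPt n t → f t = pfSum n S a t)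
    (hsym : ∀ t, f (-n - t) = - f t) (i : ℕ) (hi : i < S) (hodd : Odd i) :
    ∑ k ∈ Finset.range (n+1), a i k = 0 := by
  have key : ∀ i < S, ∀ k ≤ n, a i k = (fun i k => - ((-1)^(i+1) * a i (n - k))) i k := by
    refine pf_unique (C := 0) fun t ht => ?_
    have ht' : okPt n (-n - t) := by
      intro l hl h
      apply ht (n - l) (by omega)
      rw [Nat.cast_sub hl]
      linarith
    rw [add_zero, ← hf t ht]
    have h1 := hsym t
    rw [hf _ ht'] at h1
    have h2 : f t = - pfSum n S a (-n - t) := by linarith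
    rw [h2]
    unfold pfSum
    rw [← Finset.sum_range_reflect, ← Finset.sum_neg_distrib]
    refine Finset.sum_congr rfl fun k hk => ?_
    have hk' : k ≤ n := by have := Finset.mem_range.1 hk; omega
    rw [← Finset.sum_neg_distrib]
    refine Finset.sum_congr rfl fun i _ => ?_
    have hne := ht k hk'
    have e : (-(n:ℝ) - t + ((n + 1 - 1 - k : ℕ) : ℝ)) = (-1) * (t + k) := by
      rw [show n + 1 - 1 - k = n - k by omega, Nat.cast_sub hk']; ring
    rw [e, mul_pow, show n + 1 - 1 - k = n - k by omega]
    rcases neg_one_pow_eq_or ℝ (i+1) with h | h <;> simp only [h] <;> field_simp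
  have h1 : ∑ k ∈ Finset.range (n+1), a i k = ∑ k ∈ Finset.range (n+1), - a i (n - k) := by
    refine Finset.sum_congr rfl fun k hk => ?_
    have := key i hi k (by have := Finset.mem_range.1 hk; omega)
    rw [this]
    have he : Even (i+1) := hodd.add_one
    simp [he.neg_one_pow]
  have h2 : ∑ k ∈ Finset.range (n+1), a i (n - k) = ∑ k ∈ Finset.range (n+1), a i k := by
    rw [← Finset.sum_range_reflect (fun k => a i k)]
    rfl
  rw [Finset.sum_neg_distrib, h2] at h1
  linarith

theorem Rf_symm (D r n S : ℕ) (hD : Even D) (hD0 : 1 ≤ D) (hS : Even S) (t : ℝ) :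
    Rf D r ((2*r+1)*D) n S (-n - t) = - Rf D r ((2*r+1)*D) n S t := by
  have hDr : (D:ℝ) ≠ 0 := by positivity
  have hden : denP n (-n - t) ^ S = denP n t ^ S := by
    have : denP n (-n - t) = (-1)^(n+1) * denP n t := by
      unfold denP
      rw [← Finset.prod_range_reflect]
      rw [← Finset.card_range (n+1), ← Finset.prod_const, Finset.card_range,
        ← Finset.prod_mul_distrib]
      refine Finset.prod_congr rfl fun k hk => ?_
      have hk' : k ≤ n := by have := Finset.mem_range.1 hk; omega
      rw [show n + 1 - 1 - k = n - k by omega, Nat.cast_sub hk']; ring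
    rw [this, mul_pow, ← pow_mul, (hS.mul_left (n+1)).neg_one_pow, one_mul]
  have hnum : (-(n:ℝ) - t - r * n) * (∏ j ∈ Finset.range ((2*r+1)*D * n),
      ((D:ℝ) * (-n - t - r * n) + (j + 1))) = - ((t - r * n) *
      (∏ j ∈ Finset.range ((2*r+1)*D * n), ((D:ℝ) * (t - r * n) + (j + 1)))) := by
    set M := (2*r+1)*D*n with hM
    set y : ℝ := D * (t - r * n) with hy
    have hMe : Even M := by
      rw [hM]; exact ((hD.mul_left _).mul_right _)
    have hMr : (M:ℝ) = (2*r+1)*D*n := by rw [hM]; push_cast; ring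
    have e1 : ∏ j ∈ Finset.range M, ((D:ℝ) * (-n - t - r * n) + (j + 1)) =
        ∏ j ∈ Finset.range M, (y + j) := by
      rw [← Finset.prod_range_reflect]
      have : ∏ j ∈ Finset.range M, ((D:ℝ) * (-n - t - r * n) + (((M - 1 - j : ℕ) : ℝ) + 1)) =
          ∏ j ∈ Finset.range M, ((-1) * (y + j)) := by
        refine Finset.prod_congr rfl fun j hj => ?_
        have hj' := Finset.mem_range.1 hj
        have : ((M - 1 - j : ℕ) : ℝ) = M - 1 - j := by
          rw [Nat.cast_sub (by omega), Nat.cast_sub (by omega)]; simp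
        rw [this, hMr, hy]; ring
      rw [this, Finset.prod_mul_distrib, Finset.prod_const, Finset.card_range,
        hMe.neg_one_pow, one_mul]
    rw [e1]
    have e2 : (∏ j ∈ Finset.range M, (y + j)) * (y + M) =
        (∏ j ∈ Finset.range M, (y + ((j:ℝ) + 1))) * y := by
      have h1 := Finset.prod_range_succ (fun j : ℕ => y + (j:ℝ)) M
      have h2 := Finset.prod_range_succ' (fun j : ℕ => y + (j:ℝ)) M
      rw [← h1, h2]; push_cast; simp
    have e3 : (-(n:ℝ) - t - r * n) = - ((y + M) / D) := by
      rw [hMr, hy]; field_simp; ring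
    have e4 : t - r * n = y / D := by rw [hy]; field_simp
    rw [e3, e4]
    linear_combination (-(1:ℝ)/D) * e2
  unfold Rf
  rw [hden, hnum]
  ring


lemma tv_bound {e : ℕ → ℝ} {P Q : ℕ → Prop} {Mx η : ℝ} (he : ∀ g, 0 ≤ e g)
    (hM : ∀ g, e g ≤ Mx) (hη : 0 ≤ η)
    (hPd : ∀ g h, g ≤ h → P h → P g) (hQu : ∀ g h, g ≤ h → Q g → Q h)
    (hP : ∀ g, P g → e g ≤ e (g+1)) (hQ : ∀ g, Q g → e (g+1) ≤ e g)
    (hN : ∀ g, ¬ P g → ¬ Q g → |e (g+1) - e g| ≤ η * e g) (N : ℕ) :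
    ∑ g ∈ Finset.range N, |e (g+1) - e g| ≤ 2 * Mx + η * ∑ g ∈ Finset.range N, e g := by
  have hT : ∀ N, 0 ≤ η * ∑ g ∈ Finset.range N, e g := fun N =>
    mul_nonneg hη (Finset.sum_nonneg fun g _ => he g)
  have inv : ∀ N, ((∀ g < N, P g) → ∑ g ∈ Finset.range N, |e (g+1) - e g| ≤ e N) ∧
      ((∀ g < N, ¬ Q g) → ∑ g ∈ Finset.range N, |e (g+1) - e g| ≤
        Mx + η * ∑ g ∈ Finset.range N, e g) ∧
      (∑ g ∈ Finset.range N, |e (g+1) - e g| + e N ≤ 2 * Mx + η * ∑ g ∈ Finset.range N, e g) := by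
    intro N
    induction N with
    | zero =>
      refine ⟨fun _ => by simpa using he 0, fun _ => ?_, ?_⟩
      · simpa using (he 0).trans (hM 0)
      · have := hM 0; have := he 0; simp; linarith
    | succ N ih =>
      obtain ⟨hA, hB, hC⟩ := ih
      have hT1 := hT (N+1)
      have heN := mul_nonneg hη (he N)
      by_cases hPN : P N
      · have h1 := hA fun g hg => hPd g N hg.le hPN
        have h2 : |e (N+1) - e N| = e (N+1) - e N := abs_of_nonneg (by linarith [hP N hPN])
        have h3 := hM (N+1)
        rw [Finset.sum_range_succ (fun g => |e (g+1) - e g|), h2]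
        exact ⟨fun _ => by linarith, fun _ => by linarith, by linarith⟩
      · refine ⟨fun h => absurd (h N (by omega)) hPN, ?_, ?_⟩
        · intro h
          have h1 := hB fun g hg => h g (by omega)
          have h2 := hN N hPN (h N (by omega))
          rw [Finset.sum_range_succ, Finset.sum_range_succ, mul_add]
          linarith
        · rw [Finset.sum_range_succ, Finset.sum_range_succ, mul_add]
          by_cases hQN : Q N
          · have h2 : |e (N+1) - e N| = e N - e (N+1) := by
              rw [abs_sub_comm]; exact abs_of_nonneg (by linarith [hQ N hQN])
            linarith
          · have h1 := hB fun g hg hq => hQN (hQu g N hg.le hq)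
            have h2 := hN N hPN hQN
            have h3 := hM (N+1)
            linarith
  have := (inv N).2.2
  linarith [he N]

lemma block_bound (e : ℕ → ℝ) (m l : ℕ) :
    |∑ i ∈ Finset.range l, e (m + i) - l * e m| ≤
      l * ∑ i ∈ Finset.range l, |e (m + i + 1) - e (m + i)| := by
  have h1 : ∀ i, |e (m + i) - e m| ≤ ∑ j ∈ Finset.range i, |e (m + j + 1) - e (m + j)| := by
    intro i
    have := Finset.sum_range_sub (fun j => e (m + j)) i
    simp only [add_zero] at this
    rw [← this]
    exact Finset.abs_sum_le_sum_abs _ _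
  have h2 : ∑ i ∈ Finset.range l, e (m + i) - l * e m = ∑ i ∈ Finset.range l, (e (m+i) - e m) := by
    simp
  rw [h2]
  calc _ ≤ ∑ i ∈ Finset.range l, |e (m+i) - e m| := Finset.abs_sum_le_sum_abs _ _
    _ ≤ ∑ i ∈ Finset.range l, ∑ j ∈ Finset.range l, |e (m + j + 1) - e (m + j)| := by
        refine Finset.sum_le_sum fun i hi => (h1 i).trans ?_
        refine Finset.sum_le_sum_of_subset_of_nonneg ?_ fun _ _ _ => abs_nonneg _
        exact Finset.range_subset_range.2 (Finset.mem_range.1 hi).le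
    _ = _ := by simp

lemma sample_bound (e : ℕ → ℝ) (l N : ℕ) :
    |∑ i ∈ Finset.range (l * N), e i - l * ∑ g ∈ Finset.range N, e (l * g)| ≤
      l * ∑ i ∈ Finset.range (l * N), |e (i + 1) - e i| := by
  induction N with
  | zero => simp
  | succ N ih =>
    have hb := block_bound e (l * N) l
    rw [mul_add, mul_one, Finset.sum_range_add, Finset.sum_range_add (fun i => |e (i+1) - e i|),
      Finset.sum_range_succ, mul_add, mul_add]
    calc _ = |(∑ i ∈ Finset.range (l * N), e i - l * ∑ g ∈ Finset.range N, e (l * g)) +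
          (∑ i ∈ Finset.range l, e (l * N + i) - l * e (l * N))| := by ring_nf
      _ ≤ _ := (abs_add_le _ _).trans (add_le_add ih hb)

open Filter Topology in
lemma sample_tsum {e : ℕ → ℝ} (hs : Summable e) {l : ℕ} (hl : 1 ≤ l) {V : ℝ}
    (hV : ∀ N, ∑ g ∈ Finset.range N, |e (g+1) - e g| ≤ V) :
    Summable (fun g => e (l * g)) ∧ |∑' g, e (l * g) - (∑' g, e g) / l| ≤ V := by
  have hinj : Function.Injective (fun g : ℕ => l * g) := fun a b h =>
    Nat.eq_of_mul_eq_mul_left (by omega) h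
  have hs2 : Summable (fun g => e (l * g)) := hs.comp_injective hinj
  refine ⟨hs2, ?_⟩
  have hl0 : (0:ℝ) < l := by positivity
  have t1 : Tendsto (fun N : ℕ => ∑ i ∈ Finset.range (l * N), e i) atTop (𝓝 (∑' g, e g)) :=
    hs.hasSum.tendsto_sum_nat.comp (tendsto_id.const_mul_atTop' (by omega))
  have t2 := hs2.hasSum.tendsto_sum_nat
  have t3 := (t1.sub (t2.const_mul (l:ℝ))).abs
  have h := le_of_tendsto' t3 (b := l * V) fun N =>
    (sample_bound e l N).trans (mul_le_mul_of_nonneg_left (hV _) hl0.le)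
  have e1 : ∑' g, e (l * g) - (∑' g, e g) / l = - ((∑' g, e g) - l * ∑' g, e (l * g)) / l := by
    field_simp; ring
  rw [e1, abs_div, abs_neg, abs_of_pos hl0, div_le_iff₀ hl0]
  linarith

/-- crossing lemma -/
noncomputable def Fc (D S α β γ δ t : ℝ) : ℝ :=
  D * (Real.log (t + α) - Real.log (t - β)) - S * (Real.log (t + γ) - Real.log (t - δ))

lemma Fc_deriv {D S α β γ δ t : ℝ} (h1 : 0 < t + α) (h2 : 0 < t - β) (h3 : 0 < t + γ)
    (h4 : 0 < t - δ) : HasDerivAt (Fc D S α β γ δ)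
      ((S * (γ + δ) * (t + α) * (t - β) - D * (α + β) * (t + γ) * (t - δ)) /
        ((t + α) * (t - β) * (t + γ) * (t - δ))) t := by
  have a1 := ((hasDerivAt_id t).add_const α).log h1.ne'
  have a2 := ((hasDerivAt_id t).sub_const β).log h2.ne'
  have a3 := ((hasDerivAt_id t).add_const γ).log h3.ne'
  have a4 := ((hasDerivAt_id t).sub_const δ).log h4.ne'
  have := ((a1.sub a2).const_mul D).sub ((a3.sub a4).const_mul S)
  refine this.congr_deriv ?_
  simp only [id]
  field_simp
  ring

open Filter Topology in
lemma log_diff_tendsto (a b : ℝ) :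
    Tendsto (fun t : ℝ => Real.log (t + a) - Real.log (t + b)) atTop (𝓝 0) := by
  have h1 : Tendsto (fun t : ℝ => (t + a) / (t + b)) atTop (𝓝 1) := by
    have : Tendsto (fun t : ℝ => 1 + (a - b) * (t + b)⁻¹) atTop (𝓝 (1 + (a - b) * 0)) :=
      ((tendsto_inv_atTop_zero.comp
        (tendsto_atTop_add_const_right _ b tendsto_id)).const_mul _).const_add _
    rw [mul_zero, add_zero] at this
    refine this.congr' ?_
    filter_upwards [eventually_gt_atTop (-b)] with t ht
    have : t + b ≠ 0 := by linarith
    field_simp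
    ring
  have h2 := (Real.continuousAt_log one_ne_zero).tendsto.comp h1
  rw [Real.log_one] at h2
  refine h2.congr' ?_
  filter_upwards [eventually_gt_atTop (-b), eventually_gt_atTop (-a)] with t ht ht2
  simp only [Function.comp]
  rw [Real.log_div (by linarith) (by linarith)]

open Filter Topology in
lemma crossing {D S α β γ δ : ℝ} (hD : 0 < D) (hα : 0 < α) (hβ : 0 < β) (hγ : 0 < γ)
    (hδ : δ < β) (hlead : D * (α + β) ≤ S * (γ + δ)) {t t' : ℝ} (ht : β < t) (htt : t ≤ t')
    (hF : Fc D S α β γ δ t ≤ 0) : Fc D S α β γ δ t' ≤ 0 := by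
  by_contra! hpos
  have hlt : t < t' := by
    rcases htt.lt_or_eq with h | h
    · exact h
    · subst h; linarith
  have hder : ∀ u, β < u → HasDerivAt (Fc D S α β γ δ) _ u := fun u hu =>
    Fc_deriv (D := D) (S := S) (by linarith : 0 < u + α) (by linarith : 0 < u - β)
      (by linarith : 0 < u + γ) (by linarith : 0 < u - δ)
  obtain ⟨c, hc, hcF⟩ := exists_hasDerivAt_eq_slope (Fc D S α β γ δ) _ hlt
    (fun u hu => (hder u (by linarith [hu.1])).continuousAt.continuousWithinAt)
    (fun u hu => hder u (by linarith [hu.1]))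
  have hcβ : β < c := by linarith [hc.1]
  have hden : ∀ u, β < u → 0 < (u + α) * (u - β) * (u + γ) * (u - δ) := by
    intro u hu
    have : 0 < u + α := by linarith
    have : 0 < u - β := by linarith
    have : 0 < u + γ := by linarith
    have : 0 < u - δ := by linarith
    positivity
  have hslope : 0 < (Fc D S α β γ δ t' - Fc D S α β γ δ t) / (t' - t) :=
    div_pos (by linarith) (by linarith)
  rw [← hcF] at hslope
  have hq : 0 < S * (γ + δ) * (c + α) * (c - β) - D * (α + β) * (c + γ) * (c - δ) := by
    by_contra! h
    exact absurd hslope (not_lt.2 (div_nonpos_of_nonpos_of_nonneg h (hden c hcβ).le))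
  have hq2 : ∀ u, c ≤ u → 0 ≤ S * (γ + δ) * (u + α) * (u - β) - D * (α + β) * (u + γ) * (u - δ) := by
    intro u hu
    set A := S * (γ + δ)
    set E := D * (α + β)
    have hE : 0 < E := by positivity
    have hneg : 0 < E * (β + γ) * (β - δ) := by
      have : 0 < β - δ := by linarith
      positivity
    have key : (A * (u + α) * (u - β) - E * (u + γ) * (u - δ)) * (c - β) =
        (A * (c + α) * (c - β) - E * (c + γ) * (c - δ)) * (u - β) +
        E * (β + γ) * (β - δ) * (u - c) + (A - E) * (u - β) * (c - β) * (u - c) := by ring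
    have h1 : 0 ≤ (A - E) * (u - β) * (c - β) * (u - c) := by
      have : 0 ≤ A - E := by linarith
      have : 0 ≤ u - β := by linarith
      have : 0 ≤ c - β := by linarith
      have : 0 ≤ u - c := by linarith
      positivity
    have h2 : 0 ≤ E * (β + γ) * (β - δ) * (u - c) := mul_nonneg hneg.le (by linarith)
    have h3 : 0 ≤ (A * (c + α) * (c - β) - E * (c + γ) * (c - δ)) * (u - β) :=
      mul_nonneg hq.le (by linarith)
    have : 0 ≤ (A * (u + α) * (u - β) - E * (u + γ) * (u - δ)) * (c - β) := by
      rw [key]; linarith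
    exact nonneg_of_mul_nonneg_left this (by linarith)
  have hmono : MonotoneOn (Fc D S α β γ δ) (Set.Ici c) := by
    refine monotoneOn_of_hasDerivWithinAt_nonneg (convex_Ici c)
      (fun u hu => (hder u (lt_of_lt_of_le hcβ hu)).continuousAt.continuousWithinAt)
      (fun u hu => (hder u (lt_of_lt_of_le hcβ (interior_subset hu))).hasDerivWithinAt) ?_
    intro u hu
    have hu' : c ≤ u := interior_subset hu
    exact div_nonneg (hq2 u hu') (hden u (by linarith)).le
  have hlim : Tendsto (Fc D S α β γ δ) atTop (𝓝 0) := by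
    have := ((log_diff_tendsto α (-β)).const_mul D).sub ((log_diff_tendsto γ (-δ)).const_mul S)
    rw [mul_zero, mul_zero, sub_zero] at this
    exact this
  have := ge_of_tendsto hlim (b := Fc D S α β γ δ t') (by
    filter_upwards [eventually_ge_atTop t'] with u hu
    exact hmono hc.2.le (hc.2.le.trans hu) hu)
  linarith


lemma Rf_nonneg {D r B n S : ℕ} {t : ℝ} (ht : (r:ℝ) * n ≤ t) : 0 ≤ Rf D r B n S t := by
  have h0 : (0:ℝ) ≤ t := le_trans (by positivity) ht
  have h1 : 0 ≤ t - r * n := by linarith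
  unfold Rf denP
  positivity

lemma Rf_bound {D r B n S : ℕ} (hr : 1 ≤ r) (hn : 1 ≤ n) (hS : B ≤ S) {t : ℝ}
    (ht : (r:ℝ) * n ≤ t) :
    Rf D r B n S t ≤ ((D:ℝ) + B)^(B*n) / ((r:ℝ)+1)^(n*(S-B)) * (t / t^S) := by
  have hnt : (n:ℝ) ≤ t := by
    have : (1:ℝ) ≤ r := by exact_mod_cast hr
    nlinarith [(Nat.cast_nonneg n : (0:ℝ) ≤ n)]
  have hn1 : (1:ℝ) ≤ n := by exact_mod_cast hn
  have h0 : (0:ℝ) < t := by linarith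
  have h1 : 0 ≤ t - r * n := by linarith
  have hD0 : (0:ℝ) ≤ D := by positivity
  set Pr : ℝ := ∏ l ∈ Finset.range n, (t + ((l:ℝ)+1)) with hPr
  have hPrpos : 0 < Pr := Finset.prod_pos fun l _ => by positivity
  have hden : denP n t = Pr * t := by
    unfold denP
    rw [Finset.prod_range_succ']
    simp [hPr]
  have hnum : ∏ j ∈ Finset.range (B*n), ((D:ℝ) * (t - r * n) + ((j:ℝ) + 1)) ≤
      (((D:ℝ) + B) * t)^(B*n) := by
    have : ∏ j ∈ Finset.range (B*n), ((D:ℝ) * (t - r * n) + ((j:ℝ) + 1)) ≤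
        ∏ j ∈ Finset.range (B*n), (((D:ℝ) + B) * t) := by
      refine Finset.prod_le_prod (fun j _ => by positivity) fun j hj => ?_
      have hj' : (j:ℝ) + 1 ≤ B * n := by exact_mod_cast Finset.mem_range.1 hj
      have : (B:ℝ) * n ≤ B * t := mul_le_mul_of_nonneg_left hnt (by positivity)
      have h3 : (0:ℝ) ≤ D * (r * n) := by positivity
      nlinarith
    simpa using this
  have hfac : (n.factorial : ℝ) * ((r:ℝ)+1)^n ≤ Pr := by
    rw [← Finset.prod_range_add_one_eq_factorial]
    push_cast
    rw [← Finset.card_range n, ← Finset.prod_const, Finset.card_range, ← Finset.prod_mul_distrib]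
    refine Finset.prod_le_prod (fun j _ => by positivity) fun j hj => ?_
    have hj' : (j:ℝ) + 1 ≤ n := by exact_mod_cast Finset.mem_range.1 hj
    have : (r:ℝ) * (j + 1) ≤ r * n := mul_le_mul_of_nonneg_left hj' (by positivity)
    nlinarith
  have htn : t^n ≤ Pr := by
    rw [hPr, ← Finset.card_range n, ← Finset.prod_const, Finset.card_range]
    exact Finset.prod_le_prod (fun j _ => h0.le) fun j _ => by
      have : (0:ℝ) ≤ j := by positivity
      linarith
  unfold Rf
  rw [hden, mul_pow, div_mul_div_comm, div_le_div_iff₀ (by positivity) (by positivity)]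
  have e1 : Pr^S = Pr^B * Pr^(S-B) := by rw [← pow_add]; congr 1; omega
  have hf2 : (n.factorial : ℝ)^(S-B) * ((r:ℝ)+1)^(n*(S-B)) ≤ Pr^(S-B) := by
    rw [pow_mul, ← mul_pow]
    exact pow_le_pow_left₀ (by positivity) hfac _
  have hf3 : t^(B*n) ≤ Pr^B := by
    rw [mul_comm, pow_mul]; exact pow_le_pow_left₀ (by positivity) htn _
  have hP0 : 0 ≤ ∏ j ∈ Finset.range (B*n), ((D:ℝ) * (t - r * n) + ((j:ℝ) + 1)) :=
    Finset.prod_nonneg fun j _ => by positivity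
  have hs : t - r * n ≤ t := by
    have : (0:ℝ) ≤ r * n := by positivity
    linarith
  calc _ = (t - r * n) * (∏ j ∈ Finset.range (B*n), ((D:ℝ) * (t - r * n) + ((j:ℝ) + 1))) *
        ((n.factorial : ℝ)^(S-B) * ((r:ℝ)+1)^(n*(S-B))) * t^S := by ring
    _ ≤ t * (((D:ℝ) + B) * t)^(B*n) * Pr^(S-B) * t^S := by gcongr
    _ = t * ((D:ℝ) + B)^(B*n) * t^(B*n) * Pr^(S-B) * t^S := by rw [mul_pow]; ring
    _ ≤ t * ((D:ℝ) + B)^(B*n) * Pr^B * Pr^(S-B) * t^S := by gcongr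
    _ = _ := by rw [e1]; ring

/-- grid values -/
noncomputable def ev (D r B n S : ℕ) (g : ℕ) : ℝ := Rf D r B n S ((r:ℝ) * n + g / D)

lemma ev_nonneg {D r B n S : ℕ} (g : ℕ) : 0 ≤ ev D r B n S g :=
  Rf_nonneg (by have : (0:ℝ) ≤ (g:ℝ) / D := by positivity
                linarith)

lemma ev_zero {D r B n S : ℕ} : ev D r B n S 0 = 0 := by simp [ev, Rf]

lemma ev_form {D r B n S : ℕ} (hD : 1 ≤ D) (g : ℕ) : ev D r B n S g =
    ((g:ℝ) / D) * (∏ j ∈ Finset.range (B*n), ((g:ℝ) + ((j:ℝ)+1))) * (n.factorial : ℝ)^(S-B) /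
      (∏ l ∈ Finset.range (n+1), ((r:ℝ) * n + g / D + l))^S := by
  have : (D:ℝ) ≠ 0 := by positivity
  have h1 : (D:ℝ) * ((r:ℝ) * n + g / D - r * n) = g := by field_simp; ring
  unfold ev Rf denP
  rw [h1]
  congr 3
  ring

lemma ev_pos {D r B n S : ℕ} (hD : 1 ≤ D) {g : ℕ} (hg : 1 ≤ g) : 0 < ev D r B n S g := by
  rw [ev_form hD]
  have : (0:ℝ) < (g:ℝ)/D := by positivity
  have h2 : 0 < ∏ l ∈ Finset.range (n+1), ((r:ℝ) * n + g / D + l) :=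
    Finset.prod_pos fun l _ => by positivity
  positivity

lemma ev_bound {D r B n S : ℕ} (hD : 1 ≤ D) (hr : 1 ≤ r) (hn : 1 ≤ n) (hS : B ≤ S) (hS3 : 3 ≤ S)
    (g : ℕ) : ev D r B n S g ≤
      ((D:ℝ) + B)^(B*n) / ((r:ℝ)+1)^(n*(S-B)) * ((D:ℝ)^2 * (1 / ((g:ℝ)+1)^2)) := by
  have hD1 : (1:ℝ) ≤ D := by exact_mod_cast hD
  set x : ℝ := (r:ℝ) * n + g / D with hx
  have hrn : (1:ℝ) ≤ (r:ℝ) * n := by exact_mod_cast Nat.mul_pos hr hn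
  have hgD : (0:ℝ) ≤ (g:ℝ) / D := by positivity
  have hx1 : 1 ≤ x := by linarith
  refine (Rf_bound hr hn hS (by linarith)).trans ?_
  refine mul_le_mul_of_nonneg_left ?_ (by positivity)
  have hxg : (g:ℝ) + 1 ≤ D * x := by
    have : (D:ℝ) * x = D * (r * n) + g := by rw [hx]; field_simp
    nlinarith
  have h1 : x / x^S ≤ 1 / x^2 := by
    rw [div_le_div_iff₀ (by positivity) (by positivity)]
    have : x^3 ≤ x^S := pow_le_pow_right₀ hx1 hS3
    nlinarith
  refine h1.trans ?_
  rw [mul_one_div, div_le_div_iff₀ (by positivity) (by positivity), one_mul, ← mul_pow]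
  exact pow_le_pow_left₀ (by positivity) hxg _

/-- the ratio -/
noncomputable def qr (D r B n S : ℕ) (g : ℕ) : ℝ := ((g:ℝ) + 1 + B * n) / g *
  (∏ l ∈ Finset.range (n+1), (((r:ℝ) * n + g / D + l) / ((r:ℝ) * n + g / D + l + 1 / D)))^S

lemma ev_succ {D r B n S : ℕ} (hD : 1 ≤ D) {g : ℕ} (hg : 1 ≤ g) :
    ev D r B n S (g+1) = qr D r B n S g * ev D r B n S g := by
  rw [ev_form hD, ev_form hD, qr]
  have hD0 : (D:ℝ) ≠ 0 := by positivity
  have hg0 : (g:ℝ) ≠ 0 := by positivity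
  have e1 : ((g+1 : ℕ):ℝ) * ∏ j ∈ Finset.range (B*n), (((g+1:ℕ):ℝ) + ((j:ℝ)+1)) =
      ((g:ℝ) + 1 + B*n) * ∏ j ∈ Finset.range (B*n), ((g:ℝ) + ((j:ℝ)+1)) := by
    have h1 := Finset.prod_range_succ (fun j : ℕ => (g:ℝ) + 1 + (j:ℝ)) (B*n)
    have h2 := Finset.prod_range_succ' (fun j : ℕ => (g:ℝ) + 1 + (j:ℝ)) (B*n)
    rw [h1] at h2
    push_cast at h2 ⊢
    rw [add_zero] at h2
    calc _ = (∏ k ∈ Finset.range (B * n), ((g:ℝ) + 1 + (k + 1))) * (g + 1) := by ring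
      _ = _ := by
        rw [← h2, mul_comm]
        congr 1
        refine Finset.prod_congr rfl fun j _ => by ring
  have e2 : ∏ l ∈ Finset.range (n+1), ((r:ℝ) * n + ((g+1:ℕ):ℝ) / D + l) =
      ∏ l ∈ Finset.range (n+1), ((r:ℝ) * n + g / D + l + 1 / D) := by
    refine Finset.prod_congr rfl fun l _ => ?_
    push_cast; ring
  rw [e2, Finset.prod_div_distrib, div_pow]
  have p1 : 0 < ∏ l ∈ Finset.range (n+1), ((r:ℝ) * n + g / D + l) :=
    Finset.prod_pos fun l _ => by positivity
  have p2 : 0 < ∏ l ∈ Finset.range (n+1), ((r:ℝ) * n + g / D + l + 1 / D) :=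
    Finset.prod_pos fun l _ => by positivity
  rw [div_mul_eq_mul_div, e1]
  field_simp


lemma tele_prod (n : ℕ) {t : ℝ} (ht : 0 < t) :
    ∏ l ∈ Finset.range (n+1), ((t + l) / (t + l + 1)) = t / (t + n + 1) := by
  induction n with
  | zero => simp
  | succ n ih =>
    rw [Finset.prod_range_succ, ih]
    push_cast
    have : t + n + 1 ≠ 0 := by positivity
    have : t + (n + 1) + 1 ≠ 0 := by positivity
    field_simp
    ring

/-- the product in the ratio -/
noncomputable def pp (D n : ℕ) (t : ℝ) : ℝ :=
  ∏ l ∈ Finset.range (n+1), ((t + l) / (t + l + 1 / D))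

lemma pp_pos {D n : ℕ} {t : ℝ} (ht : 0 < t) : 0 < pp D n t :=
  Finset.prod_pos fun l _ => by positivity

lemma pp_upper {D n : ℕ} (hD : 1 ≤ D) {t : ℝ} (ht : 0 < t) : pp D n t ^ D ≤ t / (t + n + 1) := by
  rw [← tele_prod n ht, pp, ← Finset.prod_pow]
  refine Finset.prod_le_prod (fun l _ => by positivity) fun l _ => ?_
  have hx : 0 < t + l := by positivity
  have hD0 : (0:ℝ) < D := by positivity
  have hb := one_add_mul_le_pow (a := 1 / ((D:ℝ) * (t + l))) (by
    have : 0 < 1 / ((D:ℝ) * (t + l)) := by positivity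
    linarith) D
  have e1 : (t + l) / (t + l + 1 / D) = (1 + 1 / ((D:ℝ) * (t + l)))⁻¹ := by
    field_simp
  have e2 : (t + l) / (t + l + 1) = (1 + D * (1 / ((D:ℝ) * (t + l))))⁻¹ := by
    field_simp
  rw [e1, e2, inv_pow]
  exact inv_anti₀ (by positivity) hb

lemma pp_lower {D n : ℕ} (hD : 1 ≤ D) {t : ℝ} (ht : 1 ≤ t) :
    (t - (1 - 1 / D)) / (t + (n + 1 / D)) ≤ pp D n t ^ D := by
  have hD0 : (0:ℝ) < D := by positivity
  have hD1 : (1:ℝ) ≤ D := by exact_mod_cast hD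
  have hb0 : (0:ℝ) < 1 / D := by positivity
  have h := tele_prod n (t := t - (1 - 1 / D)) (by linarith)
  have e0 : (t - (1 - 1 / D)) / (t - (1 - 1 / D) + n + 1) = (t - (1 - 1 / D)) / (t + (n + 1 / D)) := by
    congr 1; ring
  rw [← e0, ← h, pp, ← Finset.prod_pow]
  refine Finset.prod_le_prod (fun l _ => ?_) fun l _ => ?_
  · have : 0 < t - (1 - 1 / D) := by linarith
    positivity
  have hx : 0 < t + l := by positivity
  have hl : (0:ℝ) ≤ l := by positivity
  have hy : 0 < t + l + 1 / D := by positivity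
  have hy1 : 1 / D / (t + l + 1 / D) ≤ 1 := by
    rw [div_le_one hy]; linarith
  have hb := one_add_mul_le_pow (a := - (1 / D / (t + l + 1 / D))) (by linarith) D
  have e1 : (t + l) / (t + l + 1 / D) = 1 + - (1 / D / (t + l + 1 / D)) := by
    field_simp; ring
  have e2 : (t - (1 - 1 / D) + l) / (t - (1 - 1 / D) + l + 1) =
      1 + D * - (1 / D / (t + l + 1 / D)) := by
    have : t - (1 - 1 / D) + l + 1 = t + l + 1 / D := by ring
    rw [this]
    field_simp
    ring
  rw [e1, e2]
  exact hb

lemma pp_simple {D n : ℕ} (hD : 1 ≤ D) {t : ℝ} (ht : 0 < t) : t / (t + n + 1) ≤ pp D n t := by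
  rw [← tele_prod n ht, pp]
  refine Finset.prod_le_prod (fun l _ => by positivity) fun l _ => ?_
  have : (1:ℝ) / D ≤ 1 := by
    rw [div_le_one (by positivity)]; exact_mod_cast hD
  exact div_le_div_of_nonneg_left (by positivity) (by positivity) (by linarith)

lemma qr_eq {D r n S : ℕ} (hD : 1 ≤ D) {g : ℕ} (hg : 1 ≤ g) :
    qr D r ((2*r+1)*D) n S g =
      (((r:ℝ) * n + g / D + ((r + 1) * n + 1 / D)) / ((r:ℝ) * n + g / D - r * n)) *
        pp D n ((r:ℝ) * n + g / D) ^ S := by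
  unfold qr pp
  congr 1
  have hD0 : (D:ℝ) ≠ 0 := by positivity
  have hg0 : (g:ℝ) ≠ 0 := by positivity
  have : (r:ℝ) * n + g / D - r * n = g / D := by ring
  rw [this]
  push_cast
  field_simp
  ring

lemma qr_pos {D r n S : ℕ} (hD : 1 ≤ D) {g : ℕ} (hg : 1 ≤ g) :
    0 < qr D r ((2*r+1)*D) n S g := by
  have : 0 < pp D n ((r:ℝ) * n + g / D) := pp_pos (by positivity)
  have h2 : (r:ℝ) * n + g / D - r * n = g / D := by ring
  rw [qr_eq hD hg, h2]
  positivity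

lemma qr_log {D r n S : ℕ} (hD : 1 ≤ D) {g : ℕ} (hg : 1 ≤ g) {t : ℝ}
    (ht : t = (r:ℝ) * n + g / D) :
    D * Real.log (qr D r ((2*r+1)*D) n S g) = D * (Real.log (t + ((r + 1) * n + 1 / D)) -
      Real.log (t - r * n)) + S * Real.log (pp D n t ^ D) := by
  have hp : 0 < pp D n t := pp_pos (by rw [ht]; positivity)
  have h2 : t - r * n = g / D := by rw [ht]; ring
  have h3 : 0 < t - r * n := by rw [h2]; positivity
  have h4 : 0 < t + ((r + 1) * n + 1 / D) := by rw [ht]; positivity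
  rw [qr_eq hD hg, ← ht, Real.log_mul (by positivity) (by positivity),
    Real.log_div h4.ne' h3.ne', Real.log_pow, Real.log_pow]
  ring

lemma qr_log_upper {D r n S : ℕ} (hD : 1 ≤ D) {g : ℕ} (hg : 1 ≤ g) {t : ℝ}
    (ht : t = (r:ℝ) * n + g / D) :
    D * Real.log (qr D r ((2*r+1)*D) n S g) ≤
      Fc D S ((r + 1) * n + 1 / D) (r * n) (n + 1) 0 t := by
  have ht0 : 0 < t := by rw [ht]; positivity
  have hp : 0 < pp D n t := pp_pos ht0
  rw [qr_log hD hg ht, Fc, sub_zero]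
  have h1 := Real.log_le_log (by positivity) (pp_upper (n := n) hD ht0)
  rw [Real.log_div (by positivity) (by positivity)] at h1
  have h2 := mul_le_mul_of_nonneg_left h1 (Nat.cast_nonneg S : (0:ℝ) ≤ S)
  rw [add_assoc t] at h2
  linarith

lemma qr_log_lower {D r n S : ℕ} (hD : 1 ≤ D) {g : ℕ} (hg : 1 ≤ g) {t : ℝ}
    (ht : t = (r:ℝ) * n + g / D) (ht1 : 1 ≤ t) :
    Fc D S ((r + 1) * n + 1 / D) (r * n) (n + 1 / D) (1 - 1 / D) t ≤
      D * Real.log (qr D r ((2*r+1)*D) n S g) := by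
  have ht0 : 0 < t := by linarith
  have hp : 0 < pp D n t := pp_pos ht0
  have hb0 : (0:ℝ) < 1 / D := by positivity
  have h3 : 0 < t - (1 - 1 / D) := by linarith
  rw [qr_log hD hg ht, Fc]
  have h1 := Real.log_le_log (by positivity) (pp_lower (n := n) hD ht1)
  rw [Real.log_div (by positivity) (by positivity)] at h1
  have h2 := mul_le_mul_of_nonneg_left h1 (Nat.cast_nonneg S : (0:ℝ) ≤ S)
  linarith

lemma Fc_gap {D S : ℕ} {α β t : ℝ} (n : ℕ) (hD : 1 ≤ D) (ht1 : 1 < t) :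
    Fc D S α β (n + 1) 0 t - Fc D S α β (n + 1 / D) (1 - 1 / D) t ≤ S / (t - 1) := by
  have hD0 : (0:ℝ) < D := by positivity
  have hb0 : (0:ℝ) < 1 / D := by positivity
  have hb1 : (1:ℝ) / D ≤ 1 := by
    rw [div_le_one (by positivity)]; exact_mod_cast hD
  have e : Fc D S α β (n + 1) 0 t - Fc D S α β (n + 1 / D) (1 - 1 / D) t =
      S * ((Real.log t - Real.log (t - (1 - 1 / D))) +
        (Real.log (t + (n + 1 / D)) - Real.log (t + (n + 1)))) := by
    simp only [Fc, sub_zero]; ring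
  have h1 : Real.log (t + (n + 1 / D)) ≤ Real.log (t + (n + 1)) :=
    Real.log_le_log (by positivity) (by linarith)
  have h2 : Real.log (t - 1) ≤ Real.log (t - (1 - 1 / D)) :=
    Real.log_le_log (by linarith) (by linarith)
  have h3 : Real.log t - Real.log (t - 1) ≤ 1 / (t - 1) := by
    rw [← Real.log_div (by linarith) (by linarith)]
    have := Real.log_le_sub_one_of_pos (x := t / (t - 1)) (div_pos (by linarith) (by linarith))
    refine this.trans (le_of_eq ?_)
    have : t - 1 ≠ 0 := by linarith
    field_simp
    ring
  rw [e, div_eq_mul_one_div (S:ℝ)]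
  refine mul_le_mul_of_nonneg_left ?_ (by positivity)
  linarith

/-- main total variation estimate, in terms of an upper bound for the maximum -/
lemma ev_tv {D r n S : ℕ} (hD : 1 ≤ D) (hr : 2 ≤ r) (hn : 1 ≤ n) (hnS : S ≤ n)
    (hS : (2*r+1)*D + 1 ≤ S) {Mx : ℝ} (hM : ∀ g, ev D r ((2*r+1)*D) n S g ≤ Mx) (N : ℕ) :
    ∑ g ∈ Finset.range N, |ev D r ((2*r+1)*D) n S (g+1) - ev D r ((2*r+1)*D) n S g| ≤
      2 * Mx + (2 * S / n) * ∑ g ∈ Finset.range N, ev D r ((2*r+1)*D) n S g := by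
  have hD0 : (0:ℝ) < D := by positivity
  have hD1 : (1:ℝ) ≤ D := by exact_mod_cast hD
  have hn1 : (1:ℝ) ≤ n := by exact_mod_cast hn
  have hr2 : (2:ℝ) ≤ r := by exact_mod_cast hr
  have hb0 : (0:ℝ) < 1 / D := by positivity
  have hb1 : (1:ℝ) / D ≤ 1 := by
    rw [div_le_one (by positivity)]; exact hD1
  have hSr : ((2*r+1)*D : ℝ) + 1 ≤ S := by exact_mod_cast hS
  have hrn : (n:ℝ) + 1 ≤ r * n := by nlinarith
  have hlead : (D:ℝ) * ((r + 1) * n + 1 / D + r * n) ≤ S * (n + 1) := by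
    have : (D:ℝ) * ((r + 1) * n + 1 / D + r * n) = ((2*r+1)*D) * n + 1 := by field_simp; ring
    rw [this]
    nlinarith
  have hgpos : ∀ g : ℕ, 1 ≤ g → (r:ℝ) * n < (r:ℝ) * n + g / D := fun g hg => by
    have : (0:ℝ) < (g:ℝ) / D := by positivity
    linarith
  have hgmono : ∀ g h : ℕ, g ≤ h → (r:ℝ) * n + g / D ≤ (r:ℝ) * n + h / D := fun g h hgh => by
    have : (g:ℝ) ≤ h := by exact_mod_cast hgh
    gcongr
  refine tv_bound (P := fun g => g = 0 ∨ 0 < Fc D S ((r + 1) * n + 1 / D) (r * n) (n + 1 / D)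
    (1 - 1 / D) ((r:ℝ) * n + g / D)) (Q := fun g => 1 ≤ g ∧ Fc D S ((r + 1) * n + 1 / D) (r * n)
    (n + 1) 0 ((r:ℝ) * n + g / D) ≤ 0) ev_nonneg hM (by positivity) ?_ ?_ ?_ ?_ ?_ N
  · rintro g h hgh (h0 | h1)
    · left; omega
    · rcases Nat.eq_zero_or_pos g with hg | hg
      · left; exact hg
      · right
        by_contra! hc
        exact absurd h1 (not_lt.2 (crossing hD0 (by positivity) (by positivity) (by positivity)
          (by linarith) (by linarith) (hgpos g hg) (hgmono g h hgh) hc))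
  · rintro g h hgh ⟨hg, hF⟩
    exact ⟨by omega, crossing hD0 (by positivity) (by positivity) (by positivity)
          (by linarith) (by linarith) (hgpos g hg) (hgmono g h hgh) hF⟩
  · intro g hP
    rcases Nat.eq_zero_or_pos g with hg | hg
    · subst hg; rw [ev_zero]; exact ev_nonneg _
    · rcases hP with h | h
      · omega
      · have h1 := qr_log_lower (S := S) (r := r) (n := n) hD hg rfl (by linarith [hgpos g hg])
        have h2 : 0 < Real.log (qr D r ((2*r+1)*D) n S g) :=
          pos_of_mul_pos_right (lt_of_lt_of_le h h1) hD0.le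
        have h3 := (Real.log_pos_iff (qr_pos hD hg).le).1 h2
        rw [ev_succ hD hg]
        exact le_mul_of_one_le_left (ev_nonneg g) h3.le
  · rintro g ⟨hg, hF⟩
    have h1 := qr_log_upper (S := S) (r := r) (n := n) hD hg rfl
    have h2 : Real.log (qr D r ((2*r+1)*D) n S g) ≤ 0 := by
      by_contra! hc
      have := mul_pos hD0 hc
      linarith
    have h3 := (Real.log_nonpos_iff (qr_pos hD hg).le).1 h2
    rw [ev_succ hD hg]
    exact mul_le_of_le_one_left (ev_nonneg g) h3
  · intro g hP hQ
    push Not at hP hQ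
    have hg : 1 ≤ g := Nat.one_le_iff_ne_zero.2 hP.1
    have hW := hP.2
    have hU := hQ hg
    have ht := hgpos g hg
    set t : ℝ := (r:ℝ) * n + g / D with htd
    have h1 := qr_log_lower (S := S) hD hg htd (by linarith)
    have h2 := qr_log_upper (S := S) hD hg htd
    have h3 := Fc_gap (S := S) (α := (r + 1) * n + 1 / D) (β := r * n) (t := t) n hD (by linarith)
    have h4 : (S:ℝ) / (t - 1) ≤ S / n :=
      div_le_div_of_nonneg_left (by positivity) (by linarith) (by linarith)
    set κ := (S:ℝ) / n
    set lq := Real.log (qr D r ((2*r+1)*D) n S g) with hl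
    have hκ1 : κ ≤ 1 := by
      rw [div_le_one (by linarith)]; exact_mod_cast hnS
    have h5 : |(D:ℝ) * lq| ≤ κ := abs_le.2 ⟨by linarith, by linarith⟩
    have h6 : |lq| ≤ κ := by
      rw [abs_mul, abs_of_pos hD0] at h5
      nlinarith [abs_nonneg lq]
    have h7 := Real.abs_exp_sub_one_le (h6.trans hκ1)
    rw [hl, Real.exp_log (qr_pos hD hg), ← hl] at h7
    rw [ev_succ hD hg]
    have e1 : qr D r ((2*r+1)*D) n S g * ev D r ((2*r+1)*D) n S g - ev D r ((2*r+1)*D) n S g =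
        (qr D r ((2*r+1)*D) n S g - 1) * ev D r ((2*r+1)*D) n S g := by ring
    rw [e1, abs_mul, abs_of_nonneg (ev_nonneg g)]
    refine mul_le_mul_of_nonneg_right ?_ (ev_nonneg g)
    have : 2 * (S:ℝ) / n = 2 * κ := by simp only [κ]; ring
    rw [this]
    linarith


lemma gq_mono {D r B n S : ℕ} (hD : 1 ≤ D) {g h : ℕ} (hg : 1 ≤ g) (hgh : g ≤ h) :
    (g:ℝ) * qr D r B n S g ≤ h * qr D r B n S h := by
  have hgh' : (g:ℝ) ≤ h := by exact_mod_cast hgh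
  have e : ∀ g : ℕ, 1 ≤ g → (g:ℝ) * qr D r B n S g = ((g:ℝ) + 1 + B * n) * (∏ l ∈ Finset.range (n+1),
      (((r:ℝ) * n + g / D + l) / ((r:ℝ) * n + g / D + l + 1 / D)))^S := by
    intro g hg
    have : (g:ℝ) ≠ 0 := by positivity
    unfold qr
    field_simp
  rw [e g hg, e h (by omega)]
  have hprod : ∏ l ∈ Finset.range (n+1), (((r:ℝ) * n + g / D + l) / ((r:ℝ) * n + g / D + l + 1 / D))
     ≤ ∏ l ∈ Finset.range (n+1), (((r:ℝ) * n + h / D + l) / ((r:ℝ) * n + h / D + l + 1 / D)) := by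
    refine Finset.prod_le_prod (fun l _ => by positivity) fun l _ => ?_
    have hx : (0:ℝ) < (r:ℝ) * n + g / D + l := by positivity
    have hxy : (r:ℝ) * n + g / D + l ≤ (r:ℝ) * n + h / D + l := by gcongr
    have hb : (0:ℝ) ≤ 1 / D := by positivity
    rw [div_le_div_iff₀ (by positivity) (by positivity)]
    nlinarith
  gcongr

lemma ev_summable {D r B n S : ℕ} (hD : 1 ≤ D) (hr : 1 ≤ r) (hn : 1 ≤ n) (hS : B ≤ S) (hS3 : 3 ≤ S) :
    Summable (ev D r B n S) := by
  have h : Summable (fun ν : ℕ => 1 / ((ν:ℝ) + 1) ^ 2) := by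
    have := (summable_nat_add_iff 1).2 (Real.summable_one_div_nat_pow.2 (by omega : 1 < 2))
    simpa using this
  exact Summable.of_nonneg_of_le ev_nonneg (ev_bound hD hr hn hS hS3) ((h.mul_left _).mul_left _)

lemma ev_tsum_le {D r B n S : ℕ} (hD : 1 ≤ D) (hr : 1 ≤ r) (hn : 1 ≤ n) (hS : B ≤ S) (hS3 : 3 ≤ S) :
    ∑' g, ev D r B n S g ≤ ((D:ℝ) + B)^(B*n) / ((r:ℝ)+1)^(n*(S-B)) *
      ((D:ℝ)^2 * ∑' g : ℕ, 1 / ((g:ℝ) + 1) ^ 2) := by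
  have h : Summable (fun ν : ℕ => 1 / ((ν:ℝ) + 1) ^ 2) := by
    have := (summable_nat_add_iff 1).2 (Real.summable_one_div_nat_pow.2 (by omega : 1 < 2))
    simpa using this
  rw [← tsum_mul_left, ← tsum_mul_left]
  exact (ev_summable hD hr hn hS hS3).tsum_le_tsum (ev_bound hD hr hn hS hS3)
    ((h.mul_left _).mul_left _)

lemma exists_argmax {e : ℕ → ℝ} (hs : Summable e) (h1 : 0 < e 1) : ∃ M, ∀ g, e g ≤ e M := by
  have ht := hs.tendsto_atTop_zero.eventually (gt_mem_nhds h1)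
  obtain ⟨N, hN⟩ := Filter.eventually_atTop.1 ht
  obtain ⟨M, hM, hmax⟩ := Finset.exists_max_image (Finset.range (N+2)) e ⟨0, by simp⟩
  refine ⟨M, fun g => ?_⟩
  by_cases hg : g < N + 2
  · exact hmax g (Finset.mem_range.2 hg)
  · exact (hN g (by omega)).le.trans (hmax 1 (by simp))

lemma ev_max {D r n S K : ℕ} (hD : 1 ≤ D) (hr : 1 ≤ r) (hn : 1 ≤ n) (hS : (2*r+1)*D ≤ S)
    (hS3 : 3 ≤ S) (hK : (2 * K * (K+1) + 2) * 3^S < n) :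
    ∃ Mx, (∀ g, ev D r ((2*r+1)*D) n S g ≤ Mx) ∧
      K * Mx ≤ 2 * ∑' g, ev D r ((2*r+1)*D) n S g := by
  set e := ev D r ((2*r+1)*D) n S with he
  have hs : Summable e := ev_summable hD hr hn hS hS3
  obtain ⟨M, hM⟩ := exists_argmax hs (ev_pos hD le_rfl)
  refine ⟨e M, hM, ?_⟩
  set G := 2 * K * (K+1) + 2 with hG
  have hM0 : M ≠ 0 := by
    rintro rfl
    have h1 := hM 1
    have h2 : 0 < e 1 := ev_pos hD le_rfl
    have h3 : e 0 = 0 := ev_zero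
    linarith
  have hMG : G < M := by
    by_contra! hle
    have hM1 : 1 ≤ M := by omega
    have hq : 1 < qr D r ((2*r+1)*D) n S M := by
      rw [qr_eq hD hM1]
      set t : ℝ := (r:ℝ) * n + M / D with ht
      have hn1 : (1:ℝ) ≤ n := by exact_mod_cast hn
      have hr1 : (1:ℝ) ≤ r := by exact_mod_cast hr
      have hMD : (0:ℝ) < (M:ℝ) / D := by positivity
      have htn : (n:ℝ) ≤ t := by nlinarith
      have hp : (1:ℝ)/3 ≤ pp D n t := by
        refine le_trans ?_ (pp_simple (n := n) hD (by linarith : 0 < t))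
        rw [div_le_div_iff₀ (by norm_num) (by linarith)]
        linarith
      have e1 : t - r * n = M / D := by rw [ht]; ring
      have hMle : (M:ℝ) / D ≤ G := by
        have : (M:ℝ) ≤ G := by exact_mod_cast hle
        have hD1 : (1:ℝ) ≤ D := by exact_mod_cast hD
        exact (div_le_self (by positivity) hD1).trans this
      have hb : (0:ℝ) ≤ 1 / D := by positivity
      have h1 : (n:ℝ) / G ≤ (t + ((r + 1) * n + 1 / D)) / (t - r * n) := by
        rw [e1]
        refine div_le_div₀ (by positivity) ?_ hMD hMle
        nlinarith
      have hG0 : (0:ℝ) < G := by positivity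
      have h2 : ((1:ℝ)/3)^S ≤ pp D n t ^ S := pow_le_pow_left₀ (by norm_num) hp S
      have h3 : 1 < (n:ℝ) / G * ((1:ℝ)/3)^S := by
        rw [div_pow, one_pow, div_mul_div_comm, mul_one, one_lt_div (by positivity)]
        exact_mod_cast hK
      refine h3.trans_le (mul_le_mul h1 h2 (by positivity) ?_)
      exact le_trans (by positivity) h1
    have h4 := hM (M+1)
    have h5 : e (M+1) = _ := ev_succ hD hM1
    have h6 : 0 < e M := ev_pos hD hM1
    rw [h5] at h4
    nlinarith
  have hMge : (2:ℝ) * K * (K+1) + 2 ≤ M := by exact_mod_cast hMG.le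
  have hpos : 0 < e M := ev_pos hD (by omega)
  have hq1 : 1 ≤ qr D r ((2*r+1)*D) n S (M-1) := by
    have h1 : e (M - 1 + 1) = _ := ev_succ hD (by omega : 1 ≤ M - 1)
    have h2 : 0 < e (M-1) := ev_pos hD (by omega)
    have h3 := hM (M-1)
    rw [Nat.sub_add_cancel (by omega)] at h1
    rw [h1] at h3
    by_contra! hc
    nlinarith
  have hK0 : (0:ℝ) ≤ K := by positivity
  set c : ℝ := ((M:ℝ) - 1) / (M + K) with hc
  have hMK : (0:ℝ) < M + K := by positivity
  have hM1r : (0:ℝ) ≤ (M:ℝ) - 1 := by nlinarith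
  have hc0 : 0 ≤ c := by positivity
  have hstep : ∀ i, i < K → c * e (M+i) ≤ e (M+i+1) := by
    intro i hi
    have h1 : e (M+i+1) = _ := ev_succ hD (by omega : 1 ≤ M + i)
    rw [h1]
    refine mul_le_mul_of_nonneg_right ?_ (ev_nonneg _)
    have h2 := gq_mono (D := D) (r := r) (B := (2*r+1)*D) (n := n) (S := S) hD
      (by omega : 1 ≤ M - 1) (by omega : M - 1 ≤ M + i)
    rw [Nat.cast_sub (by omega)] at h2
    push_cast at h2
    have hi' : (i:ℝ) ≤ K := by exact_mod_cast hi.le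
    have hqp := qr_pos (r := r) (n := n) (S := S) hD (by omega : 1 ≤ M + i)
    rw [hc, div_le_iff₀ hMK]
    nlinarith
  have hpow : ∀ i, i ≤ K → c^i * e M ≤ e (M+i) := by
    intro i
    induction i with
    | zero => intro _; simp
    | succ i ih =>
      intro hi
      have h1 := ih (by omega)
      have h2 := hstep i (by omega)
      calc c^(i+1) * e M = c * (c^i * e M) := by ring
        _ ≤ c * e (M+i) := mul_le_mul_of_nonneg_left h1 hc0
        _ ≤ _ := h2
  have hc1 : c ≤ 1 := by rw [hc, div_le_one hMK]; linarith
  have hcK : (1:ℝ)/2 ≤ c^K := by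
    have h1 := one_add_mul_le_pow (a := c - 1) (by linarith) K
    rw [add_sub_cancel] at h1
    refine le_trans ?_ h1
    have : c - 1 = - (((K:ℝ)+1) / (M + K)) := by rw [hc]; field_simp; ring
    rw [this]
    have h2 : K * (((K:ℝ)+1) / (M + K)) ≤ 1/2 := by
      rw [← mul_div_assoc, div_le_iff₀ hMK]
      nlinarith
    linarith
  have hterm : ∀ i ∈ Finset.range K, e M / 2 ≤ e (M+i) := by
    intro i hi
    have hi' := Finset.mem_range.1 hi
    refine le_trans ?_ (hpow i hi'.le)
    have : c^K ≤ c^i := pow_le_pow_of_le_one hc0 hc1 hi'.le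
    nlinarith
  have hsum := Finset.sum_le_sum hterm
  rw [Finset.sum_const, Finset.card_range, nsmul_eq_mul] at hsum
  have hs' : Summable (fun i => e (M + i)) := hs.comp_injective (add_right_injective M)
  have h1 := hs'.sum_le_tsum (Finset.range K) (fun i _ => ev_nonneg _)
  have h2 := tsum_comp_le_tsum_of_inj hs ev_nonneg (add_right_injective M)
  have h3 : ∑' i, e (M + i) ≤ ∑' i, e i := h2
  linarith

theorem ev_sampling {D r S : ℕ} (hD : 1 ≤ D) (hr : 2 ≤ r) (hS : (2*r+1)*D + 1 ≤ S)
    {ε : ℝ} (hε : 0 < ε) : ∃ N, ∀ n, N ≤ n → ∀ l, 1 ≤ l →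
      |∑' g, ev D r ((2*r+1)*D) n S (l * g) - (∑' g, ev D r ((2*r+1)*D) n S g) / l| ≤
        ε * ∑' g, ev D r ((2*r+1)*D) n S g := by
  obtain ⟨K, hK⟩ := exists_nat_gt (8 / ε)
  obtain ⟨N1, hN1⟩ := exists_nat_gt (4 * S / ε)
  have hS3 : 3 ≤ S := by
    have : 5 * 1 ≤ (2*r+1)*D := Nat.mul_le_mul (by omega) hD
    omega
  refine ⟨N1 + S + (2 * K * (K+1) + 2) * 3^S + 1, fun n hn l hl => ?_⟩
  have hn1 : 1 ≤ n := by omega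
  have hnr : (0:ℝ) < n := by positivity
  obtain ⟨Mx, hM, hMK⟩ := ev_max (D := D) (r := r) (n := n) (S := S) (K := K) hD (by omega) hn1
    (by omega) hS3 (by omega)
  have hs : Summable (ev D r ((2*r+1)*D) n S) := ev_summable hD (by omega) hn1 (by omega) hS3
  set T := ∑' g, ev D r ((2*r+1)*D) n S g with hT
  have hT0 : 0 ≤ T := tsum_nonneg ev_nonneg
  have hMx0 : 0 ≤ Mx := (ev_nonneg 0).trans (hM 0)
  refine (sample_tsum hs hl (V := ε * T) fun N => ?_).2
  refine (ev_tv hD hr hn1 (by omega) hS hM N).trans ?_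
  have h1 : ∑ g ∈ Finset.range N, ev D r ((2*r+1)*D) n S g ≤ T :=
    hs.sum_le_tsum _ (fun i _ => ev_nonneg i)
  have h2 : 2 * Mx ≤ ε / 2 * T := by
    rw [div_lt_iff₀ hε] at hK
    nlinarith
  have h3 : 2 * (S:ℝ) / n ≤ ε / 2 := by
    rw [div_lt_iff₀ hε] at hN1
    rw [div_le_iff₀ hnr]
    have : (N1:ℝ) ≤ n := by exact_mod_cast (by omega : N1 ≤ n)
    nlinarith
  have h4 : 2 * (S:ℝ) / n * ∑ g ∈ Finset.range N, ev D r ((2*r+1)*D) n S g ≤ ε / 2 * T :=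
    mul_le_mul h3 h1 (Finset.sum_nonneg fun g _ => ev_nonneg g) (by positivity)
  linarith


lemma Rf_vanish {r n S d l ν : ℕ} (hd : 1 ≤ d) (hl : 1 ≤ l) (hν : ν + 1 < r * n * d) :
    Rf (d*l) r ((2*r+1)*(d*l)) n S (((ν:ℝ) + 1) / d) = 0 := by
  have hd0 : (d:ℝ) ≠ 0 := by positivity
  have hlt : l * (ν + 1) < d * l * (r * n) := by
    calc l * (ν+1) < l * (r * n * d) := Nat.mul_lt_mul_of_pos_left hν (by omega)
      _ = _ := by ring
  have hle : d * l * (r * n) ≤ (2*r+1)*(d*l)*n := by nlinarith [Nat.zero_le (d*l*n), Nat.zero_le (d*l*(r*n))]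
  have hz : ∏ j ∈ Finset.range ((2*r+1)*(d*l)*n),
      (((d*l : ℕ):ℝ) * (((ν:ℝ) + 1) / d - r * n) + ((j:ℝ) + 1)) = 0 := by
    refine Finset.prod_eq_zero (i := d * l * (r * n) - l * (ν+1) - 1) ?_ ?_
    · rw [Finset.mem_range]; omega
    · have : ((d * l * (r * n) - l * (ν+1) - 1 : ℕ) : ℝ) = d * l * (r * n) - l * (ν + 1) - 1 := by
        rw [Nat.cast_sub (by omega), Nat.cast_sub (by omega)]; push_cast; ring
      rw [this]
      push_cast
      field_simp
      ring
  unfold Rf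
  rw [hz]; simp

lemma rhat_eq {r n S d l : ℕ} (hd : 1 ≤ d) (hl : 1 ≤ l) (hr : 1 ≤ r) (hn : 1 ≤ n)
    (hS : (2*r+1)*(d*l) ≤ S) (hS3 : 3 ≤ S) :
    Summable (fun ν : ℕ => Rf (d*l) r ((2*r+1)*(d*l)) n S (((ν:ℝ) + 1) / d)) ∧
    ∑' ν : ℕ, Rf (d*l) r ((2*r+1)*(d*l)) n S (((ν:ℝ) + 1) / d) =
      ∑' g, ev (d*l) r ((2*r+1)*(d*l)) n S (l * g) := by
  have hd0 : (d:ℝ) ≠ 0 := by positivity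
  have hl0 : (l:ℝ) ≠ 0 := by positivity
  have hpos : 1 ≤ r * n * d := Nat.mul_pos (Nat.mul_pos hr hn) hd
  have hev : Summable (ev (d*l) r ((2*r+1)*(d*l)) n S) :=
    ev_summable (Nat.mul_pos hd hl) hr hn hS hS3
  have hevl : Summable (fun g => ev (d*l) r ((2*r+1)*(d*l)) n S (l * g)) :=
    hev.comp_injective (fun a b h => Nat.eq_of_mul_eq_mul_left (by omega : 0 < l) h)
  have hshift : ∀ g : ℕ, Rf (d*l) r ((2*r+1)*(d*l)) n S ((((g + (r*n*d - 1) : ℕ):ℝ) + 1) / d) =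
      ev (d*l) r ((2*r+1)*(d*l)) n S (l * g) := by
    intro g
    unfold ev
    congr 1
    rw [Nat.cast_add, Nat.cast_sub hpos]
    push_cast
    field_simp
    ring
  have hs : Summable (fun ν : ℕ => Rf (d*l) r ((2*r+1)*(d*l)) n S (((ν:ℝ) + 1) / d)) := by
    rw [← summable_nat_add_iff (r*n*d - 1)]
    simp only [hshift]
    exact hevl
  refine ⟨hs, ?_⟩
  rw [← hs.sum_add_tsum_nat_add (r*n*d - 1)]
  simp only [hshift]
  rw [Finset.sum_eq_zero, zero_add]
  intro ν hν
  have := Finset.mem_range.1 hν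
  exact Rf_vanish hd hl (by omega)

open Filter Topology in
lemma Rf_lim {D r B n S : ℕ} (hr : 1 ≤ r) (hn : 1 ≤ n) (hS : B ≤ S) (hS3 : 3 ≤ S) :
    Tendsto (fun m : ℕ => ((m:ℝ) + 1) * Rf D r B n S ((m:ℝ) + 1)) atTop (𝓝 0) := by
  set C := ((D:ℝ) + B)^(B*n) / ((r:ℝ)+1)^(n*(S-B)) with hC
  have hC0 : 0 ≤ C := by positivity
  have hlim : Tendsto (fun m : ℕ => C * ((m:ℝ) + 1)⁻¹) atTop (𝓝 0) := by
    have := (tendsto_inv_atTop_zero.comp (tendsto_atTop_add_const_right atTop (1:ℝ)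
      (tendsto_natCast_atTop_atTop (R := ℝ)))).const_mul C
    rw [mul_zero] at this
    exact this
  refine squeeze_zero' ?_ ?_ hlim
  · filter_upwards [eventually_ge_atTop (r*n)] with m hm
    have : (r:ℝ) * n ≤ m := by exact_mod_cast hm
    exact mul_nonneg (by positivity) (Rf_nonneg (by linarith))
  · filter_upwards [eventually_ge_atTop (r*n)] with m hm
    have hm' : (r:ℝ) * n ≤ m := by exact_mod_cast hm
    have h1 := Rf_bound (D := D) hr hn hS (by linarith : (r:ℝ) * n ≤ (m:ℝ) + 1)
    set x : ℝ := (m:ℝ) + 1 with hx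
    have hx1 : 1 ≤ x := by rw [hx]; linarith [(Nat.cast_nonneg m : (0:ℝ) ≤ m)]
    calc x * Rf D r B n S x ≤ x * (C * (x / x^S)) := mul_le_mul_of_nonneg_left h1 (by linarith)
      _ = C * (x * (x / x^S)) := by ring
      _ ≤ C * x⁻¹ := by
        refine mul_le_mul_of_nonneg_left ?_ hC0
        rw [← mul_div_assoc, div_le_iff₀ (by positivity)]
        have : x^3 ≤ x^S := pow_le_pow_right₀ hx1 hS3
        calc x * x = x⁻¹ * x^3 := by field_simp
          _ ≤ _ := by gcongr

theorem package {D r n S L : ℕ} (hD : 1 ≤ D) (hDe : Even D) (hr : 1 ≤ r) (hn : 1 ≤ n)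
    (hS : (2*r+1)*D + 1 ≤ S) (hS3 : 3 ≤ S) (hSe : Even S) (hL0 : 0 < L)
    (hL : ∀ m, 1 ≤ m → m ≤ n → m ∣ L) :
    ∃ ρ : ℕ → ℝ, (∀ i < S, ∃ y : ℤ, (L:ℝ)^S * ρ i = y) ∧
      ∀ d l, 1 ≤ d → 1 ≤ l → D = d * l → ∃ y : ℤ,
        (L:ℝ)^S * ∑' g, ev D r ((2*r+1)*D) n S (l * g) =
          (L:ℝ)^S * (∑ i ∈ Finset.range S, if i = 0 ∨ Odd i then 0 else
            ρ i * (d:ℝ)^(i+1) * zeta (i+1)) - y := by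
  obtain ⟨a, hpf, hint, hE⟩ := R_pf (D := D) (r := r) (B := (2*r+1)*D) (n := n) (S := S) (L := L)
    hD hn hS hL0 hL
  have h0 : ∑ k ∈ Finset.range (n+1), a 0 k = 0 :=
    rho_zero (by omega) hpf (Rf_lim hr hn (by omega) hS3)
  have hev : ∀ i < S, Odd i → ∑ k ∈ Finset.range (n+1), a i k = 0 := fun i hi ho =>
    rho_even hpf (Rf_symm D r n S hDe hD hSe) i hi ho
  refine ⟨fun i => ∑ k ∈ Finset.range (n+1), a i k, ?_, ?_⟩
  · intro i hi
    choose y hy using hint i hi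
    refine ⟨∑ k ∈ Finset.range (n+1), y k, ?_⟩
    rw [Finset.mul_sum]
    push_cast
    exact Finset.sum_congr rfl fun k _ => hy k
  · intro d l hd hl hdl
    subst hdl
    have hrh := rhat_eq (r := r) (n := n) (S := S) hd hl hr hn (by omega) hS3
    have hlf := linform hd hpf hrh.1 h0
    rw [← hrh.2, hlf]
    have hd0 : (d:ℝ) ≠ 0 := by positivity
    have hl0 : (l:ℝ) ≠ 0 := by positivity
    have hterm : ∀ k ∈ Finset.range (n+1), ∃ y : ℤ, (L:ℝ)^S * ∑ ν ∈ Finset.range (d * k),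
        ∑ i ∈ Finset.range S, a i k / (((ν:ℝ) + 1) / d) ^ (i+1) = y := by
      intro k hk
      have hk' : k ≤ n := by have := Finset.mem_range.1 hk; omega
      have hν : ∀ ν ∈ Finset.range (d*k), ∃ y : ℤ, (L:ℝ)^S *
          ∑ i ∈ Finset.range S, a i k / (((ν:ℝ) + 1) / d) ^ (i+1) = y := by
        intro ν hν
        have hν' := Finset.mem_range.1 hν
        have h1 : l * (ν+1) ≤ d * l * k := by
          calc l * (ν+1) ≤ l * (d * k) := Nat.mul_le_mul_left _ hν'
            _ = _ := by ring
        have h2 : 1 ≤ d * l * (r * n) := Nat.mul_pos (Nat.mul_pos hd hl) (Nat.mul_pos hr hn)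
        have h3 : d * l * (r * n) + d * l * k ≤ (2*r+1)*(d*l)*n := by
          have : d * l * k ≤ d * l * n := Nat.mul_le_mul_left _ hk'
          nlinarith [Nat.zero_le (d*l*(r*n))]
        have h4 : 1 ≤ l * (ν+1) := Nat.mul_pos hl (by omega)
        have hcast : ((d * l * (r * n) + d * l * k - l * (ν+1) - 1 : ℕ) : ℝ) =
            d * l * (r * n) + d * l * k - l * (ν + 1) - 1 := by
          rw [Nat.cast_sub (by omega), Nat.cast_sub (by omega)]; push_cast; ring
        have hpt : ((r:ℝ)*n - (((d * l * (r * n) + d * l * k - l * (ν+1) - 1 : ℕ) : ℝ)+1)/((d*l:ℕ):ℝ))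
            + k = ((ν:ℝ) + 1) / d := by
          rw [hcast]; push_cast; field_simp; ring
        obtain ⟨y, hy⟩ := hE k hk' (d * l * (r * n) + d * l * k - l * (ν+1) - 1) (by omega)
          (by rw [hpt]; positivity)
        rw [hpt] at hy
        exact ⟨y, hy⟩
      choose! y hy using hν
      refine ⟨∑ ν ∈ Finset.range (d*k), y ν, ?_⟩
      rw [Finset.mul_sum]
      push_cast
      exact Finset.sum_congr rfl hy
    choose! y hy using hterm
    refine ⟨∑ k ∈ Finset.range (n+1), y k, ?_⟩
    rw [mul_sub]
    congr 1
    · congr 1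
      refine Finset.sum_congr rfl fun i hi => ?_
      by_cases hi0 : i = 0
      · simp [hi0]
      · by_cases hio : Odd i
        · simp [hi0, hio, hev i (Finset.mem_range.1 hi) hio]
        · simp [hi0, hio]
    · rw [Finset.mul_sum]
      push_cast
      exact Finset.sum_congr rfl hy


lemma lcm_bound (n : ℕ) : (Nat.lcmUpto n : ℝ) ≤ 256^n := by
  have h0 : (0:ℝ) < Nat.lcmUpto n := by exact_mod_cast Nat.lcmUpto_pos n
  rw [← Real.log_le_log_iff h0 (by positivity), ← Chebyshev.psi_eq_log_lcmUpto, Real.log_pow]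
  refine (Chebyshev.psi_le_const_mul_self (by positivity)).trans ?_
  rw [mul_comm]
  refine mul_le_mul_of_nonneg_left ?_ (by positivity)
  have h1 : (4:ℝ) ≤ Real.log 64 := by
    rw [Real.le_log_iff_exp_le (by norm_num)]
    have := Real.exp_one_lt_d9
    have e : Real.exp 4 = Real.exp 1 ^ 4 := by rw [← Real.exp_nat_mul]; norm_num
    rw [e]
    calc Real.exp 1 ^ 4 ≤ 2.7182818286 ^ 4 := pow_le_pow_left₀ (Real.exp_pos _).le this.le 4
      _ ≤ 64 := by norm_num
  have h2 : Real.log 256 = Real.log 4 + Real.log 64 := by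
    rw [← Real.log_mul (by norm_num) (by norm_num)]; norm_num
  linarith

lemma common_den (s : ℕ) : ∃ A : ℕ, 0 < A ∧ ∀ j ≤ s, ¬ Irrational (zeta j) → ∃ z : ℤ,
    (A:ℝ) * zeta j = z := by
  have h : ∀ j, ∃ q : ℕ, 0 < q ∧ (¬ Irrational (zeta j) → ∃ z : ℤ, (q:ℝ) * zeta j = z) := by
    intro j
    by_cases hj : Irrational (zeta j)
    · exact ⟨1, one_pos, fun h => absurd hj h⟩
    · unfold Irrational at hj
      push Not at hj
      obtain ⟨x, hx⟩ := hj
      refine ⟨x.den, x.den_pos, fun _ => ⟨x.num, ?_⟩⟩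
      rw [← hx]
      exact_mod_cast Rat.den_mul_eq_num x
  choose q hq0 hq using h
  refine ⟨∏ j ∈ Finset.range (s+1), q j, Finset.prod_pos fun j _ => hq0 j, fun j hj hirr => ?_⟩
  obtain ⟨z, hz⟩ := hq j hirr
  obtain ⟨c, hc⟩ := Finset.dvd_prod_of_mem q (Finset.mem_range.2 (by omega : j < s + 1))
  refine ⟨c * z, ?_⟩
  rw [hc]
  push_cast
  rw [← hz]; ring

open Polynomial in
/-- the elimination polynomial -/
noncomputable def Wp (I : Finset ℕ) : ℤ[X] := ∏ i ∈ I, (X - C ((2:ℤ)^i))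

open Polynomial in
lemma Wp_sum {I : Finset ℕ} {k : ℕ} (hI : I.card ≤ k) (x : ℝ) :
    ∑ u ∈ Finset.range (k+1), ((Wp I).coeff u : ℝ) * x^u = ∏ i ∈ I, (x - 2^i) := by
  have h1 : (Wp I).natDegree < k + 1 := by
    have : (Wp I).natDegree = I.card := by
      unfold Wp
      rw [natDegree_prod_of_monic _ _ (fun i _ => monic_X_sub_C _)]
      simp only [natDegree_X_sub_C, Finset.sum_const, smul_eq_mul, mul_one]
    omega
  have h2 : ((Wp I).map (Int.castRingHom ℝ)).natDegree < k + 1 :=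
    lt_of_le_of_lt natDegree_map_le h1
  have h3 := eval_eq_sum_range' h2 x
  simp only [coeff_map, eq_intCast] at h3
  rw [← h3]
  unfold Wp
  rw [Polynomial.map_prod, eval_prod]
  simp

open Filter Topology in
theorem many_irrational {k s : ℕ} (hk : 1 ≤ k) (hs : Odd s) (hs1 : 1023 * 2^k * (k+19) ≤ s)
    (I : Finset ℕ) (hI : ∀ i, i ∈ I ↔ Odd i ∧ 3 ≤ i ∧ i ≤ s ∧ Irrational (zeta i)) :
    k < I.card := by
  by_contra! hcard
  set D := 2^k with hD
  set S := s + 1 with hS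
  have hD1 : 1 ≤ D := Nat.one_le_two_pow
  have hDe : Even D := (Nat.even_pow).2 ⟨even_two, by omega⟩
  have hSe : Even S := hs.add_one
  have hBS : (2*511+1)*D + 1 ≤ S := by
    have : 1023 * D * 1 ≤ 1023 * D * (k+19) := Nat.mul_le_mul_left _ (by omega)
    omega
  have hS3 : 3 ≤ S := by omega
  obtain ⟨A, hA0, hA⟩ := common_den s
  have hDr : (0:ℝ) < D := by positivity
  set w : ℕ → ℝ := fun u => ((Wp I).coeff u : ℝ) with hw
  set W2 : ℝ := ∏ i ∈ I, ((2:ℝ) - 2^i) with hW2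
  have hW2ne : W2 ≠ 0 := by
    refine Finset.prod_ne_zero_iff.2 fun i hi => ?_
    have h3 := ((hI i).1 hi).2.1
    have : (2:ℝ)^3 ≤ 2^i := pow_le_pow_right₀ (by norm_num) h3
    have : (2:ℝ)^3 = 8 := by norm_num
    intro h; linarith
  have hW2pos : 0 < |W2| := abs_pos.2 hW2ne
  set sw : ℝ := ∑ u ∈ Finset.range (k+1), |w u| with hsw
  have hsw0 : 0 ≤ sw := Finset.sum_nonneg fun u _ => abs_nonneg _
  obtain ⟨N, hN⟩ := ev_sampling (D := D) (r := 511) (S := S) hD1 (by norm_num) hBS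
    (ε := |W2| / (2 * D * (sw + 1))) (by positivity)
  -- smallness
  set Cz : ℝ := (D:ℝ)^2 * ∑' g : ℕ, 1 / ((g:ℝ) + 1) ^ 2 with hCz
  set θ : ℝ := 256^S * (((D:ℝ) + ((2*511+1)*D : ℕ))^((2*511+1)*D) /
    (((511:ℕ):ℝ)+1)^(S - (2*511+1)*D)) with hθ
  have hθ0 : 0 ≤ θ := by positivity
  have hθ1 : θ < 1 := by
    have e1 : (D:ℝ) + ((2*511+1)*D : ℕ) = 2^(k+10) := by
      push_cast [hD]; rw [pow_add]; ring
    have e2 : (((511:ℕ):ℝ)+1) = 2^9 := by norm_num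
    have e3 : (256:ℝ) = 2^8 := by norm_num
    rw [hθ, e1, e2, e3, ← mul_div_assoc, div_lt_one (by positivity), ← pow_mul, ← pow_mul, ← pow_mul,
      ← pow_add]
    refine pow_lt_pow_right₀ (by norm_num) ?_
    obtain ⟨c, hc⟩ : ∃ c, S = (2*511+1)*D + c := ⟨S - (2*511+1)*D, by omega⟩
    rw [hc, Nat.add_sub_cancel_left]
    have : 1023 * D * (k+19) < S := by omega
    rw [hc] at this
    nlinarith
  have hlim : Tendsto (fun n : ℕ => (A * (2 * |W2| / D) * Cz) * θ^n) atTop (𝓝 0) := by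
    have := (tendsto_pow_atTop_nhds_zero_of_lt_one hθ0 hθ1).const_mul (A * (2 * |W2| / D) * Cz)
    rwa [mul_zero] at this
  obtain ⟨n, hsmall, hnN, hn1⟩ := ((hlim.eventually (gt_mem_nhds one_pos)).and
    ((eventually_ge_atTop N).and (eventually_ge_atTop 1))).exists
  have hL0 := Nat.lcmUpto_pos n
  set L := Nat.lcmUpto n with hL
  obtain ⟨ρ, hρ, hpk⟩ := package (D := D) (r := 511) (n := n) (S := S) (L := L) hD1 hDe (by norm_num)
    hn1 hBS hS3 hSe hL0 (fun m hm1 hmn => by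
      rw [hL]; unfold Nat.lcmUpto
      exact Finset.dvd_lcm (f := id) (Finset.mem_Icc.2 ⟨hm1, hmn⟩))
  set e := ev D 511 ((2*511+1)*D) n S with he
  set T := ∑' g, e g with hT
  have hsum : Summable e := ev_summable hD1 (by norm_num) hn1 (by omega) hS3
  have hTpos : 0 < T := hsum.tsum_pos ev_nonneg 1 (ev_pos hD1 le_rfl)
  have hTle : T ≤ _ := ev_tsum_le (D := D) (r := 511) (B := (2*511+1)*D) (n := n) (S := S) hD1
    (by norm_num) hn1 (by omega) hS3
  set Tu : ℕ → ℝ := fun u => ∑' g, e (2^(k-u) * g) with hTu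
  set Λ : ℝ := ∑ u ∈ Finset.range (k+1), w u * Tu u with hΛ
  -- integrality
  have hu : ∀ u ∈ Finset.range (k+1), ∃ y : ℤ, (L:ℝ)^S * Tu u =
      (L:ℝ)^S * (∑ i ∈ Finset.range S, if i = 0 ∨ Odd i then 0 else
            ρ i * (((2:ℝ)^(i+1))^u) * zeta (i+1)) - y := by
    intro u hu
    have hu' := Finset.mem_range.1 hu
    obtain ⟨y, hy⟩ := hpk (2^u) (2^(k-u)) Nat.one_le_two_pow Nat.one_le_two_pow (by
      rw [hD, ← pow_add]; congr 1; omega)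
    refine ⟨y, ?_⟩
    rw [hTu]
    simp only
    rw [hy]
    congr 2
    refine Finset.sum_congr rfl fun i _ => ?_
    split_ifs
    · rfl
    · push_cast
      rw [← pow_mul, ← pow_mul, mul_comm u]
  choose! y hy using hu
  have hLam : (L:ℝ)^S * Λ = (L:ℝ)^S * (∑ i ∈ Finset.range S, if i = 0 ∨ Odd i then 0 else
      ρ i * (∏ j ∈ I, ((2:ℝ)^(i+1) - 2^j)) * zeta (i+1)) -
      ((∑ u ∈ Finset.range (k+1), (Wp I).coeff u * y u : ℤ) : ℝ) := by
    have h1 : (L:ℝ)^S * Λ = ∑ u ∈ Finset.range (k+1), w u * ((L:ℝ)^S * Tu u) := by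
      rw [hΛ, Finset.mul_sum]
      exact Finset.sum_congr rfl fun u _ => by ring
    rw [h1]
    have h2 : ∑ u ∈ Finset.range (k+1), w u * ((L:ℝ)^S * Tu u) = ∑ u ∈ Finset.range (k+1),
        ((L:ℝ)^S * (∑ i ∈ Finset.range S, if i = 0 ∨ Odd i then 0 else
            ρ i * (w u * ((2:ℝ)^(i+1))^u) * zeta (i+1)) - w u * y u) := by
      refine Finset.sum_congr rfl fun u hu => ?_
      rw [hy u hu, mul_sub, mul_left_comm, Finset.mul_sum (a := w u)]
      congr 2
      refine Finset.sum_congr rfl fun i _ => ?_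
      split_ifs
      · simp
      · ring
    rw [h2, Finset.sum_sub_distrib, ← Finset.mul_sum, Finset.sum_comm]
    push_cast
    congr 2
    refine Finset.sum_congr rfl fun i _ => ?_
    split_ifs
    · simp
    · rw [← Finset.sum_mul, ← Finset.mul_sum, ← Wp_sum hcard]
  have hALam : ∃ z : ℤ, (A:ℝ) * ((L:ℝ)^S * Λ) = z := by
    have hterm : ∀ i ∈ Finset.range S, ∃ z : ℤ, (A:ℝ) * ((L:ℝ)^S * (if i = 0 ∨ Odd i then 0 else
        ρ i * (∏ j ∈ I, ((2:ℝ)^(i+1) - 2^j)) * zeta (i+1))) = z := by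
      intro i hi
      have hi' := Finset.mem_range.1 hi
      split_ifs with hc
      · exact ⟨0, by simp⟩
      · push Not at hc
        have hodd : Odd (i+1) := (Nat.not_odd_iff_even.1 hc.2).add_one
        have hi3 : 3 ≤ i + 1 := by
          obtain ⟨m, hm⟩ := hodd
          omega
        have his : i + 1 ≤ s := by
          obtain ⟨m, hm⟩ := hodd
          obtain ⟨m', hm'⟩ := hs
          omega
        by_cases hirr : Irrational (zeta (i+1))
        · have hmem : i + 1 ∈ I := (hI _).2 ⟨hodd, hi3, his, hirr⟩
          have : ∏ j ∈ I, ((2:ℝ)^(i+1) - 2^j) = 0 := Finset.prod_eq_zero hmem (by simp)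
          exact ⟨0, by simp [this]⟩
        · obtain ⟨z, hz⟩ := hA (i+1) his hirr
          obtain ⟨y', hy'⟩ := hρ i hi'
          refine ⟨y' * (∏ j ∈ I, ((2:ℤ)^(i+1) - 2^j)) * z, ?_⟩
          push_cast
          rw [← hz, ← hy']
          ring
    choose! z hz using hterm
    refine ⟨∑ i ∈ Finset.range S, z i - A * (∑ u ∈ Finset.range (k+1), (Wp I).coeff u * y u), ?_⟩
    rw [hLam, mul_sub, Finset.mul_sum, Finset.mul_sum, Finset.sum_congr rfl hz]
    push_cast
    ring
  -- size
  have happ : |Λ - W2 / D * T| ≤ |W2| / (2 * D) * T := by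
    have e1 : W2 / D * T = ∑ u ∈ Finset.range (k+1), w u * (T / (2^(k-u) : ℕ)) := by
      rw [hW2, ← Wp_sum hcard, div_mul_eq_mul_div, Finset.sum_mul, Finset.sum_div]
      refine Finset.sum_congr rfl fun u hu => ?_
      have hu' := Finset.mem_range.1 hu
      have : (D:ℝ) = 2^u * 2^(k-u) := by
        rw [hD, ← pow_add]; push_cast; congr 1; omega
      rw [this]
      push_cast
      simp only [hw]
      field_simp
    rw [e1, hΛ, ← Finset.sum_sub_distrib]
    refine (Finset.abs_sum_le_sum_abs _ _).trans ?_
    have h1 : ∀ u ∈ Finset.range (k+1), |w u * Tu u - w u * (T / (2^(k-u) : ℕ))| ≤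
        |w u| * (|W2| / (2 * D * (sw + 1)) * T) := by
      intro u _
      rw [← mul_sub, abs_mul]
      exact mul_le_mul_of_nonneg_left (hN n hnN (2^(k-u)) Nat.one_le_two_pow) (abs_nonneg _)
    refine (Finset.sum_le_sum h1).trans ?_
    rw [← Finset.sum_mul, ← hsw]
    have : |W2| / (2 * D) * T = (sw + 1) * (|W2| / (2 * D * (sw + 1)) * T) := by
      field_simp
    rw [this]
    refine mul_le_mul_of_nonneg_right (by linarith) (by positivity)
  have hmain : |W2 / D * T| = |W2| / D * T := by
    rw [abs_mul, abs_div, abs_of_pos hDr, abs_of_pos hTpos]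
  have hc : |W2| / (2 * D) * T = |W2| / D * T / 2 := by field_simp
  have hWT : 0 < |W2| / D * T := by positivity
  have hlow : 0 < |Λ| := by
    have := abs_sub_abs_le_abs_sub (W2 / D * T) Λ
    rw [abs_sub_comm, hmain] at this
    linarith
  have hup : |Λ| ≤ 2 * |W2| / D * T := by
    have := abs_sub_abs_le_abs_sub Λ (W2 / D * T)
    rw [hmain] at this
    have e : 2 * |W2| / D * T = 2 * (|W2| / D * T) := by ring
    rw [e]
    linarith
  obtain ⟨z, hz⟩ := hALam
  have hLr : (0:ℝ) < L := by exact_mod_cast hL0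
  have hAr : (0:ℝ) < A := by exact_mod_cast hA0
  have hz0 : z ≠ 0 := by
    rintro rfl
    rw [Int.cast_zero] at hz
    have hΛ0 : Λ ≠ 0 := abs_pos.1 hlow
    have : (A:ℝ) * ((L:ℝ)^S * Λ) ≠ 0 := by positivity
    exact this hz
  have hz1 : (1:ℝ) ≤ |(z:ℝ)| := by
    rw [← Int.cast_abs]
    exact_mod_cast Int.one_le_abs hz0
  have hbig : |(z:ℝ)| ≤ (A * (2 * |W2| / D) * Cz) * θ^n := by
    rw [← hz, abs_mul, abs_mul, abs_of_pos hAr, abs_of_pos (by positivity : (0:ℝ) < (L:ℝ)^S)]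
    have hLS : (L:ℝ)^S ≤ (256^S)^n := by
      rw [← pow_mul, mul_comm S n, pow_mul]
      exact pow_le_pow_left₀ hLr.le (lcm_bound n) S
    have hθn : θ^n = (256^S)^n * (((D:ℝ) + ((2*511+1)*D : ℕ))^((2*511+1)*D*n) /
        (((511:ℕ):ℝ)+1)^(n*(S - (2*511+1)*D))) := by
      rw [hθ, mul_pow, div_pow, pow_mul _ ((2*511+1)*D) n, mul_comm n, pow_mul _ (S - (2*511+1)*D) n]
    calc (A:ℝ) * ((L:ℝ)^S * |Λ|) ≤ A * ((256^S)^n * (2 * |W2| / D * T)) := by gcongr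
      _ = A * (2 * |W2| / D) * ((256^S)^n * T) := by ring
      _ ≤ A * (2 * |W2| / D) * ((256^S)^n * ((((D:ℝ) + ((2*511+1)*D : ℕ))^((2*511+1)*D*n) /
        (((511:ℕ):ℝ)+1)^(n*(S - (2*511+1)*D))) * Cz)) := by gcongr
      _ = _ := by rw [hθn]; ring
  linarith

/-- For every ε > 0 there exists A such that for every odd a ≥ A, n₁(a) + n₂(a) ≥
(2−ε)·(log a)/(1+log 2), where n₁(a) counts odd i ∈ {3,…,a} with ζ(i) irrational, and n₂(a)
counts odd j ∈ {5,…,a} with ζ(j) irrational and ζ(j−2) rational. -/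
theorem stmt1 :
    ∀ ε : ℝ, 0 < ε → ∃ A : ℕ, ∀ a : ℕ, Odd a → A ≤ a →
      (2 - ε) * Real.log a / (1 + Real.log 2) ≤
        (({i : ℕ | Odd i ∧ 3 ≤ i ∧ i ≤ a ∧ Irrational (zeta i)}.ncard : ℝ) +
         ({j : ℕ | Odd j ∧ 5 ≤ j ∧ j ≤ a ∧ Irrational (zeta j) ∧
            ¬ Irrational (zeta (j - 2))}.ncard : ℝ)) := by
  intro ε hε
  obtain ⟨A, hA⟩ := exists_nat_gt (Real.exp 1000000)
  refine ⟨A, fun a ha hAa => ?_⟩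
  have hAr : (A:ℝ) ≤ a := by exact_mod_cast hAa
  have ha0 : (0:ℝ) < a := lt_of_lt_of_le ((Real.exp_pos _).trans hA) hAr
  set x := Real.log a with hx
  have hx1 : 1000000 ≤ x := by
    rw [hx, Real.le_log_iff_exp_le ha0]; linarith
  have hl1 := Real.log_two_gt_d9
  have hl2 := Real.log_two_lt_d9
  set k := ⌊(1.2:ℝ) * x⌋₊ with hk
  have hk1 : (k:ℝ) ≤ 1.2 * x := Nat.floor_le (by linarith)
  have hk2 : 1.2 * x < k + 1 := Nat.lt_floor_add_one _
  have hk3 : 1 ≤ k := by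
    have : (1:ℝ) < k := by linarith
    exact_mod_cast this.le
  have hbound : 1023 * 2^k * (k+19) ≤ a := by
    have hr : (1023:ℝ) * 2^k * (k+19) ≤ a := by
      have h1 : (2:ℝ)^k ≤ Real.exp (0.84 * x) := by
        have : (2:ℝ)^k = Real.exp (k * Real.log 2) := by
          rw [Real.exp_nat_mul, Real.exp_log (by norm_num)]
        rw [this]
        apply Real.exp_le_exp.2
        have hk0 : (0:ℝ) ≤ k := by positivity
        nlinarith
      have h2 : 1023 * ((k:ℝ) + 19) ≤ Real.exp (0.16 * x) := by
        have := Real.quadratic_le_exp_of_nonneg (by linarith : 0 ≤ 0.16 * x)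
        nlinarith
      have h3 : (a:ℝ) = Real.exp (0.84 * x) * Real.exp (0.16 * x) := by
        rw [← Real.exp_add, ← Real.exp_log ha0, ← hx]; congr 1; ring
      rw [h3]
      calc (1023:ℝ) * 2^k * (k+19) = 2^k * (1023 * (k+19)) := by ring
        _ ≤ _ := mul_le_mul h1 h2 (by positivity) (Real.exp_pos _).le
    exact_mod_cast hr
  classical
  set I : Finset ℕ := (Finset.range (a+1)).filter
    (fun i => Odd i ∧ 3 ≤ i ∧ i ≤ a ∧ Irrational (zeta i)) with hI
  have hmem : ∀ i, i ∈ I ↔ Odd i ∧ 3 ≤ i ∧ i ≤ a ∧ Irrational (zeta i) := by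
    intro i
    rw [hI, Finset.mem_filter, Finset.mem_range]
    exact ⟨fun h => h.2, fun h => ⟨by omega, h⟩⟩
  have hcard := many_irrational hk3 ha hbound I hmem
  have hset : {i : ℕ | Odd i ∧ 3 ≤ i ∧ i ≤ a ∧ Irrational (zeta i)} = (I : Set ℕ) := by
    ext i
    simp only [Set.mem_setOf_eq, Finset.mem_coe, hmem]
  rw [hset, Set.ncard_coe_finset]
  have h1 : (k:ℝ) + 1 ≤ I.card := by exact_mod_cast hcard
  have h2 : (2 - ε) * x / (1 + Real.log 2) ≤ 1.2 * x := by
    rw [div_le_iff₀ (by linarith)]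
    have : 0 < ε * x := by positivity
    nlinarith
  have h3 : (0:ℝ) ≤ ({j : ℕ | Odd j ∧ 5 ≤ j ∧ j ≤ a ∧ Irrational (zeta j) ∧
            ¬ Irrational (zeta (j - 2))}.ncard : ℝ) := by positivity
  linarith
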